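/- arXiv:2512.06587 — 6 statements merged into one kernel-verified Lean document; each statement's English description precedes it below -/
import Mathlib

section
/- For every integer l ≥ 6, the function g_l(j) is strictly increasing in j for 0 ≤ j ≤ τ = ⌊l/3⌋, and its second-order finite differences are strictly positive: Δ²g_l(j) = g_l(j+1) − 2·g_l(j) + g_l(j−1) > 0 for every integer j with 1 ≤ j ≤ τ − 1. -/
/-- `g_l(j) = ((l+j)^(2j))² / ((l+3j)^(2j) · (l−j)^(2j))` as a rational number, where
`x^(m)` denotes the descending factorial `x(x−1)⋯(x−m+1)`. -/
def gFn (l j : ℕ) : ℚ :=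
  ((Nat.descFactorial (l + j) (2 * j) : ℚ)) ^ 2 /
    ((Nat.descFactorial (l + 3 * j) (2 * j) : ℚ) * (Nat.descFactorial (l - j) (2 * j) : ℚ))

/-!
Put `P n = ∏_{k < n} (L - k (k + 1))`. For `L = l (l + 1)` the factors of `(l + n)^(2n)` pair up as
`(l + k + 1) (l - k) = L - k (k + 1)`, so this descending factorial is `P n`. Splitting
`(l + 3j)^(6j)` into three blocks of length `2j` then gives `g_l(j) = P j ^ 3 / P (3j)`.
For any `p ≥ 2` in place of `3`, consecutive quotients of `P j ^ p / P (pj)` are products over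
`c < p` of `(L - j (j + 1)) / (L - (pj + c) (pj + c + 1))`. These factors are nondecreasing in `j`,
at least `1`, and greater than `1` for `c ≠ 0`, so the sequence is strictly increasing and
log-convex. Strict convexity follows, since `a (c - 2b + a) ≥ (b - a)²` whenever `b² ≤ a c`.
-/

open Finset

section PronicRatio

variable {K : Type*} [Field K]

/-- The product `∏_{k < n} (L - k (k + 1))` over the first `n` pronic numbers `k (k + 1)`. At
`L = l (l + 1)` it is the descending factorial `(l + n)^(2n)`. -/
def pronicProd (L : K) (n : ℕ) : K :=
  ∏ k ∈ range n, (L - k * (k + 1))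

/-- The quotient `P j ^ p / P (p j)` of pronic products `P n = pronicProd L n`. The case `p = 3`,
`L = l (l + 1)` is `g_l(j)`. -/
def pronicRatio (p : ℕ) (L : K) (j : ℕ) : K :=
  pronicProd L j ^ p / pronicProd L (p * j)

/-- The factor of index `c` in the quotient of the values of `pronicRatio p L` at `x + 1` and `x`,
as a function of field elements `p`, `c` and `x`. -/
def pronicFactor (p c L x : K) : K :=
  (L - x * (x + 1)) / (L - (p * x + c) * (p * x + c + 1))

theorem pronicRatio_succ (p : ℕ) (L : K) (j : ℕ) :
    pronicRatio p L (j + 1) = pronicRatio p L j * ∏ c ∈ range p, pronicFactor (p : K) c L j := by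
  simp only [pronicRatio, pronicProd, pronicFactor, prod_div_distrib, prod_const, card_range,
    prod_range_succ, mul_add_one, prod_range_add, mul_pow, mul_div_mul_comm, Nat.cast_add,
    Nat.cast_mul]

theorem cast_descFactorial_eq_pronicProd (l n : ℕ) :
    ((l + n).descFactorial (2 * n) : K) = pronicProd ((l : K) * (l + 1)) n := by
  induction n with
  | zero => simp [pronicProd]
  | succ n ih =>
    have step : (l + (n + 1)).descFactorial (2 * (n + 1)) =
        (l + n).descFactorial (2 * n) * ((l + n + 1) * (l - n)) := by
      rw [mul_add_one, ← add_assoc, Nat.succ_descFactorial_succ, Nat.descFactorial_succ,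
        show l + n - 2 * n = l - n by lia]
      ring
    rw [step, pronicProd, prod_range_succ, ← pronicProd, ← ih, Nat.cast_mul]
    obtain hn | hn := le_or_gt n l
    · push_cast [Nat.cast_sub hn]
      ring
    · simp [Nat.descFactorial_of_lt (show l + n < 2 * n by lia)]

theorem pronic_mul_add_lt [LT K] {L : K} {p j : ℕ}
    (h : ∀ k < p * (j + 1), (k * (k + 1) : K) < L) {c : ℕ} (hc : c < p) :
    ((p * j + c) * (p * j + c + 1) : K) < L :=
  mod_cast h (p * j + c) (by lia)

variable [LinearOrder K] [IsStrictOrderedRing K] {L : K}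

section PronicFactor

variable {p c x y : K}

theorem one_le_pronicFactor (hp : 1 ≤ p) (hc : 0 ≤ c) (hx : 0 ≤ x)
    (hL : (p * x + c) * (p * x + c + 1) < L) : 1 ≤ pronicFactor p c L x := by
  have hle : x ≤ p * x + c := le_add_of_le_of_nonneg (le_mul_of_one_le_left hx hp) hc
  rw [pronicFactor, one_le_div (sub_pos.2 hL)]
  gcongr

theorem one_lt_pronicFactor (hp : 1 ≤ p) (hc : 0 < c) (hx : 0 ≤ x)
    (hL : (p * x + c) * (p * x + c + 1) < L) : 1 < pronicFactor p c L x := by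
  have hlt : x < p * x + c := lt_add_of_le_of_pos (le_mul_of_one_le_left hx hp) hc
  rw [pronicFactor, one_lt_div (sub_pos.2 hL)]
  gcongr

theorem pronicFactor_le_pronicFactor (hp : 1 ≤ p) (hc : 0 ≤ c) (hx : 0 ≤ x) (hxy : x ≤ y)
    (hL : (p * y + c) * (p * y + c + 1) < L) :
    pronicFactor p c L x ≤ pronicFactor p c L y := by
  have hy : 0 ≤ y := hx.trans hxy
  have : 0 ≤ p := zero_le_one.trans hp
  have : 0 ≤ p - 1 := sub_nonneg.2 hp
  have hLx : (p * x + c) * (p * x + c + 1) < L := hL.trans_le' (by gcongr)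
  have hyL : y ≤ L := by
    have : y ≤ p * y + c := le_add_of_le_of_nonneg (le_mul_of_one_le_left hy hp) hc
    nlinarith
  have hL₀ : 0 ≤ L := hy.trans hyL
  have hxyL : p * (x * y) ≤ L * (p + 1) * (x + y) := by
    calc p * (x * y) = y * p * x := by ring
      _ ≤ L * (p + 1) * (x + y) := by gcongr <;> linarith
  rw [pronicFactor, pronicFactor, div_le_div_iff₀ (sub_pos.2 hLx) (sub_pos.2 hL), ← sub_nonneg]
  calc 0 ≤ (y - x) * ((p - 1) * (L * (p + 1) * (x + y) - p * (x * y)) + (p - 1) * L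
        + 2 * p * c * (L + x * y) + c * (c + 1) * (x + y + 1)) := by
        have := sub_nonneg.2 hxy
        have := sub_nonneg.2 hxyL
        positivity
    _ = _ := by ring

end PronicFactor

theorem pronicProd_pos {n : ℕ} (h : ∀ k < n, (k * (k + 1) : K) < L) : 0 < pronicProd L n :=
  prod_pos fun k hk ↦ sub_pos.2 (h k (mem_range.1 hk))

variable {p j : ℕ}

theorem pronicRatio_pos (h : ∀ k < p * j, (k * (k + 1) : K) < L) : 0 < pronicRatio p L j := by
  obtain rfl | hp := p.eq_zero_or_pos
  · simp [pronicRatio, pronicProd]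
  · have hj : 0 < pronicProd L j :=
      pronicProd_pos fun k hk ↦ h k (hk.trans_le (Nat.le_mul_of_pos_left j hp))
    exact div_pos (pow_pos hj p) (pronicProd_pos h)

theorem one_lt_prod_pronicFactor (hp : 1 < p) (h : ∀ k < p * (j + 1), (k * (k + 1) : K) < L) :
    1 < ∏ c ∈ range p, pronicFactor (p : K) c L j := by
  have hp₁ : (1 : K) ≤ p := mod_cast hp.le
  calc (1 : K) = ∏ c ∈ range p, 1 := prod_const_one.symm
    _ < ∏ c ∈ range p, pronicFactor (p : K) c L j :=
      prod_lt_prod (fun _ _ ↦ one_pos)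
        (fun c hc ↦ one_le_pronicFactor hp₁ c.cast_nonneg j.cast_nonneg
          (pronic_mul_add_lt h (mem_range.1 hc)))
        ⟨1, mem_range.2 hp, one_lt_pronicFactor hp₁ (by simp) j.cast_nonneg
          (pronic_mul_add_lt h hp)⟩

theorem prod_pronicFactor_le_succ (h : ∀ k < p * (j + 2), (k * (k + 1) : K) < L) :
    ∏ c ∈ range p, pronicFactor (p : K) c L j ≤
      ∏ c ∈ range p, pronicFactor (p : K) c L (j + 1 : ℕ) := by
  have one_le_p {c : ℕ} (hc : c ∈ range p) : (1 : K) ≤ p :=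
    mod_cast Nat.one_le_of_lt (mem_range.1 hc)
  refine prod_le_prod (fun c hc ↦ zero_le_one.trans ?_) (fun c hc ↦ ?_)
  · exact one_le_pronicFactor (one_le_p hc) c.cast_nonneg j.cast_nonneg
      (pronic_mul_add_lt (fun k hk ↦ h k (by lia)) (mem_range.1 hc))
  · exact pronicFactor_le_pronicFactor (one_le_p hc) c.cast_nonneg j.cast_nonneg
      (mod_cast j.le_succ) (pronic_mul_add_lt h (mem_range.1 hc))

theorem pronicRatio_lt_succ (hp : 1 < p) (h : ∀ k < p * (j + 1), (k * (k + 1) : K) < L) :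
    pronicRatio p L j < pronicRatio p L (j + 1) := by
  rw [pronicRatio_succ]
  exact lt_mul_of_one_lt_right (pronicRatio_pos fun k hk ↦ h k (by lia))
    (one_lt_prod_pronicFactor hp h)

theorem pronicRatio_strictMonoOn (hp : 1 < p) (h : ∀ k < p * j, (k * (k + 1) : K) < L) :
    StrictMonoOn (pronicRatio p L) (Set.Iic j) :=
  strictMonoOn_of_lt_succ Set.ordConnected_Iic fun _ _ _ hi ↦
    pronicRatio_lt_succ hp fun k hk ↦ h k (hk.trans_le (Nat.mul_le_mul_left p hi))

theorem pronicRatio_succ_sq_le (h : ∀ k < p * (j + 2), (k * (k + 1) : K) < L) :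
    pronicRatio p L (j + 1) ^ 2 ≤ pronicRatio p L j * pronicRatio p L (j + 2) := by
  have pos : 0 < pronicRatio p L j := pronicRatio_pos fun k hk ↦ h k (by lia)
  have pos_succ : 0 < pronicRatio p L (j + 1) := pronicRatio_pos fun k hk ↦ h k (by lia)
  calc pronicRatio p L (j + 1) ^ 2
      = pronicRatio p L j * (pronicRatio p L (j + 1) *
          ∏ c ∈ range p, pronicFactor (p : K) c L j) := by
        rw [sq, mul_left_comm, ← pronicRatio_succ]
    _ ≤ pronicRatio p L j * (pronicRatio p L (j + 1) *
          ∏ c ∈ range p, pronicFactor (p : K) c L (j + 1 : ℕ)) := by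
        gcongr ?_ * (?_ * ?_)
        exact prod_pronicFactor_le_succ h
    _ = pronicRatio p L j * pronicRatio p L (j + 2) := by rw [← pronicRatio_succ]

theorem second_difference_pos_of_sq_le_mul {a b c : K} (ha : 0 < a) (hab : a ≠ b)
    (h : b ^ 2 ≤ a * c) : 0 < c - 2 * b + a := by
  refine pos_of_mul_pos_right ?_ ha.le
  calc 0 < (b - a) ^ 2 := sq_pos_of_ne_zero (sub_ne_zero.2 hab.symm)
    _ = b ^ 2 - 2 * a * b + a ^ 2 := by ring
    _ ≤ a * c - 2 * a * b + a ^ 2 := by gcongr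
    _ = a * (c - 2 * b + a) := by ring

theorem pronicRatio_second_difference_pos (hp : 1 < p)
    (h : ∀ k < p * (j + 2), (k * (k + 1) : K) < L) :
    0 < pronicRatio p L (j + 2) - 2 * pronicRatio p L (j + 1) + pronicRatio p L j :=
  second_difference_pos_of_sq_le_mul (pronicRatio_pos fun k hk ↦ h k (by lia))
    (pronicRatio_lt_succ hp fun k hk ↦ h k (by lia)).ne (pronicRatio_succ_sq_le h)

theorem cast_pronic_lt_cast_pronic {k l : ℕ} (h : k < l) : (k * (k + 1) : K) < l * (l + 1) := by
  gcongr

end PronicRatio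

theorem descFactorial_add_three_mul (l j : ℕ) :
    (l + 3 * j).descFactorial (2 * (3 * j)) = (l + 3 * j).descFactorial (2 * j) *
      (l + j).descFactorial (2 * j) * (l - j).descFactorial (2 * j) := by
  rw [← Nat.descFactorial_mul_descFactorial (show 2 * j ≤ 2 * (3 * j) by lia),
    ← Nat.descFactorial_mul_descFactorial (show 2 * j ≤ 2 * (3 * j) - 2 * j by lia),
    show l + 3 * j - 2 * j = l + j by lia, show l + j - 2 * j = l - j by lia,
    show 2 * (3 * j) - 2 * j - 2 * j = 2 * j by lia]
  ring

theorem gFn_eq_pronicRatio (l : ℕ) : gFn l = pronicRatio 3 ((l : ℚ) * (l + 1)) := by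
  funext j
  rw [gFn, pronicRatio, ← cast_descFactorial_eq_pronicProd, ← cast_descFactorial_eq_pronicProd,
    descFactorial_add_three_mul]
  push_cast
  obtain h | h := eq_or_ne ((l + j).descFactorial (2 * j) : ℚ) 0
  · simp [h]
  · field_simp

/-- For every integer `l ≥ 6`, with `τ = ⌊l/3⌋`, `g_l(j)` is strictly increasing in `j` for
`0 ≤ j ≤ τ`, and its second-order finite differences
`Δ²g_l(j) = g_l(j+1) − 2 g_l(j) + g_l(j−1)` are strictly positive for `1 ≤ j ≤ τ − 1`. -/
theorem stmt3 (l : ℕ) (hl : 6 ≤ l) :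
    (∀ j k : ℕ, j < k → k ≤ l / 3 → gFn l j < gFn l k) ∧
    (∀ j : ℕ, 1 ≤ j → j ≤ l / 3 - 1 →
      0 < gFn l (j + 1) - 2 * gFn l j + gFn l (j - 1)) := by
  rw [gFn_eq_pronicRatio]
  refine ⟨fun j k hjk hk ↦ ?_, fun j hj hjl ↦ ?_⟩
  · exact pronicRatio_strictMonoOn (by simp) (fun i hi ↦ cast_pronic_lt_cast_pronic (by lia))
      (hjk.le.trans hk) hk hjk
  · obtain ⟨i, rfl⟩ := Nat.exists_eq_add_of_le' hj
    exact pronicRatio_second_difference_pos (by simp) fun k hk ↦ cast_pronic_lt_cast_pronic (by lia)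
end

section
/- For every integer l ≥ 6, the second-order finite differences of g_l(j) are strictly increasing: Δ³g_l(j) = Δ²g_l(j+1) − Δ²g_l(j) > 0 for every integer j with 1 ≤ j ≤ τ − 2, where τ = ⌊l/3⌋. -/
/-- The second-order finite difference `Δ²g_l(j) = g_l(j+1) − 2 g_l(j) + g_l(j−1)`. -/
def d2g (l j : ℕ) : ℚ := gFn l (j + 1) - 2 * gFn l j + gFn l (j - 1)

/-
The ratio of consecutive values of `g_l` factors as
`g_l(j+1) / g_l(j) = ∏_{c = 0, 1, 2} (L - j(j+1)) / (L - (3j+c)(3j+c+1))` with `L = l(l+1)`.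
Sequences whose forward differences are all nonnegative are closed under sums and products, and,
because `Δ(1/(a - q))(j) = Δq(j) / ((a - q(j)) (a - q(j+1)))`, also under `q ↦ 1/(a - q)` for `a`
above the values of `q`. Each of the three factors is `1` plus a polynomial with nonnegative
coefficients times such a reciprocal, so all forward differences of the ratio `r` are nonnegative.
Writing `Δg_l = (r(0) - 1) g_l + (r - r(0)) g_l` with `r(0) > 1`, induction shows that every forward
difference of `g_l` is positive; the theorem is the case of order three.
-/

open Finset
open scoped fwdDiff Nat

/-- Finite absolute monotonicity: every forward difference of `f`, of any order, that involves only
the values `f 0, …, f (N - 1)` is nonnegative. It is the property of the ratios `g_l(j+1) / g_l(j)`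
that forces the forward differences of `g_l` to be positive. The bound `N` keeps the poles of
these ratios out of the range. -/
def AbsMonotoneOnRange {R : Type*} [AddCommGroup R] [LE R] (f : ℕ → R) (N : ℕ) : Prop :=
  ∀ k j, j + k < N → 0 ≤ Δ_[1] ^[k] f j

namespace AbsMonotoneOnRange

section AddCommGroup

variable {R : Type*} [AddCommGroup R] [PartialOrder R] {f g : ℕ → R} {N : ℕ} {a : R}

theorem nonneg (hf : AbsMonotoneOnRange f N) {j : ℕ} (hj : j < N) : 0 ≤ f j :=
  hf 0 j hj

theorem zero_right (f : ℕ → R) : AbsMonotoneOnRange f 0 :=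
  fun _ _ h ↦ absurd h (Nat.not_lt_zero _)

theorem mono (hf : AbsMonotoneOnRange f N) {M : ℕ} (hMN : M ≤ N) : AbsMonotoneOnRange f M :=
  fun k j hjk ↦ hf k j (hjk.trans_le hMN)

theorem succ_iff :
    AbsMonotoneOnRange f (N + 1) ↔
      (∀ j < N + 1, 0 ≤ f j) ∧ AbsMonotoneOnRange (Δ_[1] f) N := by
  refine ⟨fun hf ↦ ⟨fun _ ↦ hf.nonneg, fun k j hjk ↦ hf (k + 1) j (by lia)⟩, ?_⟩
  rintro ⟨hf, hΔ⟩ (_ | k) j hjk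
  · exact hf j hjk
  · exact hΔ k j (by lia)

theorem shift (hf : AbsMonotoneOnRange f (N + 1)) : AbsMonotoneOnRange (fun j ↦ f (j + 1)) N :=
  fun k j hjk ↦ by simpa only [fwdDiff_iter_comp_add] using hf k (j + 1) (by lia)

theorem congr (hf : AbsMonotoneOnRange f N) (hfg : ∀ j < N, f j = g j) :
    AbsMonotoneOnRange g N := by
  induction N generalizing f g with
  | zero => exact zero_right _
  | succ N ih =>
    obtain ⟨hf₀, hΔ⟩ := succ_iff.1 hf
    refine succ_iff.2 ⟨fun j hj ↦ hfg j hj ▸ hf₀ j hj, ih hΔ fun j hj ↦ ?_⟩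
    simp only [fwdDiff, hfg j (by lia), hfg (j + 1) (by lia)]

theorem const (ha : 0 ≤ a) (N : ℕ) : AbsMonotoneOnRange (fun _ ↦ a) N := by
  induction N generalizing a with
  | zero => exact zero_right _
  | succ N ih => exact succ_iff.2 ⟨fun _ _ ↦ ha, by simpa only [fwdDiff_const] using ih le_rfl⟩

variable [IsOrderedAddMonoid R]

theorem add (hf : AbsMonotoneOnRange f N) (hg : AbsMonotoneOnRange g N) :
    AbsMonotoneOnRange (f + g) N := fun k j hjk ↦ by
  simpa only [fwdDiff_iter_add, Pi.add_apply] using add_nonneg (hf k j hjk) (hg k j hjk)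

theorem apply_zero_le (hf : AbsMonotoneOnRange f N) {j : ℕ} (hj : j < N) : f 0 ≤ f j := by
  induction j with
  | zero => exact le_rfl
  | succ j ih => exact (ih (by lia)).trans (sub_nonneg.1 (hf 1 j hj))

theorem sub_apply_zero (hf : AbsMonotoneOnRange f N) :
    AbsMonotoneOnRange (fun j ↦ f j - f 0) N := by
  cases N with
  | zero => exact zero_right _
  | succ N =>
    refine succ_iff.2 ⟨fun j hj ↦ sub_nonneg.2 (hf.apply_zero_le hj), ?_⟩
    exact (succ_iff.1 hf).2.congr fun j _ ↦ (sub_sub_sub_cancel_right _ _ _).symm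

end AddCommGroup

section CommRing

variable {R : Type*} [CommRing R] [PartialOrder R] [IsOrderedRing R] {f g : ℕ → R} {N : ℕ}

theorem natCast (N : ℕ) : AbsMonotoneOnRange (fun j ↦ (j : R)) N := by
  cases N with
  | zero => exact zero_right _
  | succ N =>
    refine succ_iff.2 ⟨fun j _ ↦ j.cast_nonneg, (const zero_le_one N).congr fun j _ ↦ ?_⟩
    simp only [fwdDiff, Nat.cast_add_one, add_sub_cancel_left]

theorem mul (hf : AbsMonotoneOnRange f N) (hg : AbsMonotoneOnRange g N) :
    AbsMonotoneOnRange (f * g) N := by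
  induction N generalizing f g with
  | zero => exact zero_right _
  | succ N ih =>
    have hΔf := (succ_iff.1 hf).2
    have hΔg := (succ_iff.1 hg).2
    have leibniz : Δ_[1] (f * g) = Δ_[1] f * g + f * Δ_[1] g + Δ_[1] f * Δ_[1] g :=
      fwdDiff_smul 1 f g
    refine succ_iff.2 ⟨fun j hj ↦ mul_nonneg (hf.nonneg hj) (hg.nonneg hj), ?_⟩
    rw [leibniz]
    exact ((ih hΔf (hg.mono N.le_succ)).add (ih (hf.mono N.le_succ) hΔg)).add (ih hΔf hΔg)

theorem mul_natCast_add {a b : R} (ha : 0 ≤ a) (hb : 0 ≤ b) (N : ℕ) :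
    AbsMonotoneOnRange (fun j ↦ a * j + b) N :=
  ((const ha N).mul (natCast N)).add (const hb N)

theorem prod {ι : Type*} {s : Finset ι} {f : ι → ℕ → R}
    (hf : ∀ i ∈ s, AbsMonotoneOnRange (f i) N) : AbsMonotoneOnRange (fun j ↦ ∏ i ∈ s, f i j) N := by
  simpa only [prod_fn] using
    prod_induction f (AbsMonotoneOnRange · N) (fun _ _ ↦ mul) (const zero_le_one N) hf

theorem fwdDiff_sub_smul {r : ℕ → R} (hg : AbsMonotoneOnRange g N)
    (hr : AbsMonotoneOnRange r N) (hgr : ∀ j < N, g (j + 1) = g j * r j) :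
    AbsMonotoneOnRange (Δ_[1] g - (r 0 - 1) • g) N := by
  refine (hg.mul hr.sub_apply_zero).congr fun j hj ↦ ?_
  simp only [Pi.mul_apply, Pi.sub_apply, Pi.smul_apply, smul_eq_mul, fwdDiff, hgr j hj]
  ring

end CommRing

theorem inv_const_sub {K : Type*} [Field K] [LinearOrder K] [IsStrictOrderedRing K] {q : ℕ → K}
    {N : ℕ} {a : K} (hq : AbsMonotoneOnRange q N) (hqa : ∀ j < N, q j < a) :
    AbsMonotoneOnRange (fun j ↦ (a - q j)⁻¹) N := by
  induction N generalizing q with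
  | zero => exact zero_right _
  | succ N ih =>
    have hpos (j : ℕ) (hj : j < N + 1) : 0 < a - q j := sub_pos.2 (hqa j hj)
    have hinv := ih (hq.mono N.le_succ) fun j hj ↦ hqa j (by lia)
    have hinv_shift := ih hq.shift fun j hj ↦ hqa (j + 1) (by lia)
    refine succ_iff.2 ⟨fun j hj ↦ (inv_pos.2 (hpos j hj)).le, ?_⟩
    refine (((succ_iff.1 hq).2.mul hinv).mul hinv_shift).congr fun j hj ↦ ?_
    have h₀ := (hpos j (by lia)).ne'
    have h₁ := (hpos (j + 1) (by lia)).ne'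
    simp only [Pi.mul_apply, fwdDiff]
    field_simp
    ring

end AbsMonotoneOnRange

theorem pos_of_succ_eq_mul {R : Type*} [Semiring R] [PartialOrder R] [IsStrictOrderedRing R]
    {g r : ℕ → R} {N : ℕ} (hg₀ : 0 < g 0) (hgr : ∀ j < N, g (j + 1) = g j * r j)
    (hr : ∀ j < N, 0 < r j) {j : ℕ} (hj : j ≤ N) : 0 < g j := by
  induction j with
  | zero => exact hg₀
  | succ j ih =>
    rw [hgr j hj]
    exact mul_pos (ih (by lia)) (hr j hj)

theorem fwdDiff_iter_pos_of_succ_eq_mul {R : Type*} [CommRing R] [PartialOrder R]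
    [IsStrictOrderedRing R] {g r : ℕ → R} {N : ℕ} (hg₀ : 0 < g 0)
    (hgr : ∀ j < N, g (j + 1) = g j * r j) (hr : AbsMonotoneOnRange r N)
    (hr_one : ∀ j < N, 1 < r j) {k j : ℕ} (hjk : j + k ≤ N) : 0 < Δ_[1] ^[k] g j := by
  induction N generalizing k j with
  | zero =>
    obtain ⟨rfl, rfl⟩ : j = 0 ∧ k = 0 := by lia
    exact hg₀
  | succ N ih =>
    have hpos {k j : ℕ} (hjk : j + k ≤ N) : 0 < Δ_[1] ^[k] g j :=
      ih (fun j hj ↦ hgr j (by lia)) (hr.mono N.le_succ) (fun j hj ↦ hr_one j (by lia)) hjk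
    cases k with
    | zero => exact pos_of_succ_eq_mul hg₀ hgr (fun j hj ↦ zero_lt_one.trans (hr_one j hj)) hjk
    | succ k =>
      have hg : AbsMonotoneOnRange g (N + 1) := fun k j hjk ↦ (hpos (by lia)).le
      have hrest := hg.fwdDiff_sub_smul hr hgr k j hjk
      have hmain : 0 < (r 0 - 1) * Δ_[1] ^[k] g j :=
        mul_pos (sub_pos.2 (hr_one 0 N.succ_pos)) (hpos (by lia))
      rw [Function.iterate_succ_apply, ← add_sub_cancel ((r 0 - 1) • g) (Δ_[1] g),
        fwdDiff_iter_add, fwdDiff_iter_const_smul]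
      exact add_pos_of_pos_of_nonneg hmain hrest

theorem cast_descFactorial_add {K : Type*} [DivisionRing K] [CharZero K] (n k : ℕ) :
    ((n + k).descFactorial k : K) = (n + k)! / n ! := by
  rw [eq_div_iff (Nat.cast_ne_zero.2 n.factorial_ne_zero), ← Nat.cast_mul, mul_comm,
    ← Nat.factorial_mul_descFactorial (Nat.le_add_left k n), Nat.add_sub_cancel]

theorem gFn_three_mul_add (j m : ℕ) :
    gFn (3 * j + m) j = ((4 * j + m)! ^ 3 * m ! : ℚ) / ((2 * j + m)! ^ 3 * (6 * j + m)!) := by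
  rw [gFn, show 3 * j + m + j = 2 * j + m + 2 * j by ring,
    show 3 * j + m + 3 * j = 4 * j + m + 2 * j by ring,
    show 3 * j + m - j = m + 2 * j by lia]
  simp only [cast_descFactorial_add]
  rw [show 2 * j + m + 2 * j = 4 * j + m by ring, show 4 * j + m + 2 * j = 6 * j + m by ring,
    add_comm m]
  field_simp

/-- The factor `(L - j(j+1)) / (L - (3j+c)(3j+c+1))`, where `L = l(l+1)`, of the ratio
`g_l(j+1) / g_l(j)`, which is the product of these factors over `c = 0, 1, 2`. Numerator and
denominator are written in factored form. -/
def gRatioFactor (l c j : ℕ) : ℚ :=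
  (l - j) * (l + j + 1) / ((l - (3 * j + c)) * (l + (3 * j + c) + 1))

theorem prod_gRatioFactor_three_mul_add (j m : ℕ) :
    ∏ c ∈ range 3, gRatioFactor (3 * j + (m + 3)) c j =
      ((4 * j + m + 4) * (2 * j + m + 3) : ℚ) ^ 3 /
        ((m + 3) * (m + 2) * (m + 1) * ((6 * j + m + 4) * (6 * j + m + 5) * (6 * j + m + 6))) := by
  simp only [prod_range_succ, prod_range_zero, gRatioFactor, one_mul, div_mul_div_comm]
  push_cast
  congr 1 <;> ring

theorem gFn_succ {l j : ℕ} (hj : j < l / 3) :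
    gFn l (j + 1) = gFn l j * ∏ c ∈ range 3, gRatioFactor l c j := by
  obtain ⟨m, rfl⟩ := Nat.exists_eq_add_of_le (show 3 * (j + 1) ≤ l by lia)
  have h₂ : (2 * j + (m + 3))! = (2 * j + m + 3) * (2 * (j + 1) + m)! := by
    rw [show 2 * j + (m + 3) = 2 * (j + 1) + m + 1 by ring, Nat.factorial_succ]
    ring
  have h₄ : (4 * (j + 1) + m)! = (4 * j + m + 4) * (4 * j + (m + 3))! := by
    rw [show 4 * (j + 1) + m = 4 * j + (m + 3) + 1 by ring, Nat.factorial_succ]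
    ring
  have h₆ : (6 * (j + 1) + m)! =
      (6 * j + m + 4) * (6 * j + m + 5) * (6 * j + m + 6) * (6 * j + (m + 3))! := by
    rw [show 6 * (j + 1) + m = 6 * j + (m + 3) + 3 by ring]
    simp only [Nat.factorial_succ]
    ring
  have h₀ : (m + 3)! = (m + 3) * (m + 2) * (m + 1) * m ! := by
    simp only [Nat.factorial_succ]
    ring
  rw [gFn_three_mul_add, show 3 * (j + 1) + m = 3 * j + (m + 3) by ring, gFn_three_mul_add,
    prod_gRatioFactor_three_mul_add, h₀, h₂, h₄, h₆]
  push_cast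
  field_simp

theorem gRatioFactor_den_pos {l c j : ℕ} (hj : 3 * j + c < l) :
    (0 : ℚ) < l * (l + 1) - (3 * j + c) * (3 * j + (c + 1)) := by
  have hj : (3 * j + c : ℚ) < l := mod_cast hj
  nlinarith

theorem gRatioFactor_eq_one_add {l c j : ℕ} (hj : 3 * j + c < l) :
    gRatioFactor l c j = 1 + (2 * j + c) * (4 * j + (c + 1)) *
      (l * (l + 1) - (3 * j + c) * (3 * j + (c + 1)) : ℚ)⁻¹ := by
  have hne := (gRatioFactor_den_pos hj).ne'
  rw [gRatioFactor, ← div_eq_mul_inv, one_add_div hne]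
  congr 1 <;> ring

theorem absMonotoneOnRange_gRatioFactor (l : ℕ) {c : ℕ} (hc : c < 3) :
    AbsMonotoneOnRange (gRatioFactor l c) (l / 3) := by
  have hlin (a b : ℕ) : AbsMonotoneOnRange (fun j ↦ (a * j + b : ℚ)) (l / 3) :=
    .mul_natCast_add a.cast_nonneg b.cast_nonneg _
  have hinv := ((hlin 3 c).mul (hlin 3 (c + 1))).inv_const_sub (a := (l * (l + 1) : ℚ))
    fun j hj ↦ by simpa using gRatioFactor_den_pos (show 3 * j + c < l by lia)
  refine ((AbsMonotoneOnRange.const zero_le_one _).add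
    (((hlin 2 c).mul (hlin 4 (c + 1))).mul hinv)).congr fun j hj ↦ ?_
  rw [gRatioFactor_eq_one_add (by lia)]
  simp

theorem one_le_gRatioFactor {l c j : ℕ} (hj : 3 * j + c < l) : 1 ≤ gRatioFactor l c j := by
  have hpos := gRatioFactor_den_pos hj
  rw [gRatioFactor_eq_one_add hj, le_add_iff_nonneg_right]
  positivity

theorem one_lt_gRatioFactor {l c j : ℕ} (hc : 0 < c) (hj : 3 * j + c < l) :
    1 < gRatioFactor l c j := by
  have hpos := gRatioFactor_den_pos hj
  rw [gRatioFactor_eq_one_add hj, lt_add_iff_pos_right]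
  positivity

theorem one_lt_prod_gRatioFactor {l j : ℕ} (hj : j < l / 3) :
    1 < ∏ c ∈ range 3, gRatioFactor l c j := by
  simp only [prod_range_succ, prod_range_zero, one_mul]
  have h₀ := one_le_gRatioFactor (show 3 * j + 0 < l by lia)
  have h₁ := one_lt_gRatioFactor one_pos (show 3 * j + 1 < l by lia)
  have h₂ := one_lt_gRatioFactor two_pos (show 3 * j + 2 < l by lia)
  exact one_lt_mul_of_lt_of_le (one_lt_mul_of_le_of_lt h₀ h₁) h₂.le

theorem gFn_zero (l : ℕ) : gFn l 0 = 1 := by simp [gFn]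

theorem stmt4_general {l k j : ℕ} (h : 3 * (j + k) ≤ l) : 0 < Δ_[1] ^[k] (gFn l) j :=
  fwdDiff_iter_pos_of_succ_eq_mul (N := l / 3) (r := fun j ↦ ∏ c ∈ range 3, gRatioFactor l c j)
    (gFn_zero l ▸ one_pos) (fun _ ↦ gFn_succ)
    (.prod fun _ hc ↦ absMonotoneOnRange_gRatioFactor l (mem_range.1 hc))
    (fun _ ↦ one_lt_prod_gRatioFactor) (by lia)

theorem d2g_succ (l j : ℕ) : d2g l (j + 1) = Δ_[1] ^[2] (gFn l) j := by
  simp only [d2g, Function.iterate_succ_apply, Function.iterate_zero_apply, fwdDiff,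
    Nat.add_sub_cancel]
  ring

theorem d2g_succ_sub_d2g (l j : ℕ) :
    d2g l (j + 1 + 1) - d2g l (j + 1) = Δ_[1] ^[3] (gFn l) j := by
  rw [d2g_succ, d2g_succ, Function.iterate_succ_apply' _ 2, fwdDiff]

/-- For every integer `l ≥ 6`, the second-order finite differences of `g_l` are strictly
increasing: `Δ³g_l(j) = Δ²g_l(j+1) − Δ²g_l(j) > 0` for every `1 ≤ j ≤ ⌊l/3⌋ − 2`. -/
theorem stmt4 (l : ℕ) (hl : 6 ≤ l) (j : ℕ) (hj1 : 1 ≤ j) (hj2 : j ≤ l / 3 - 2) :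
    0 < d2g l (j + 1) - d2g l j := by
  obtain ⟨i, rfl⟩ := Nat.exists_eq_add_of_le' hj1
  exact d2g_succ_sub_d2g l i ▸ stmt4_general (by lia)
end

section
/- For every integer l ≥ 6 and every integer j with 1 ≤ j ≤ τ − 1, where τ = ⌊l/3⌋, the function d_l(j) = g_l(j) − h_l(j) has strictly positive second-order finite differences: Δ²d_l(j) = d_l(j+1) − 2·d_l(j) + d_l(j−1) > 0. -/
/-!
Let `P(a) = (l - a)(l + a + 1) = l(l + 1) - a(a + 1)`. Since `∏_{a < n} P(a)` is the descending
factorial `(l + n)^(2n)`, we get `g(j) = (∏_{a < j} P(a))³ / ∏_{a < 3j} P(a)`, so that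
`g(j + 1) = ρ(j) g(j)` with `ρ(j) = q₀(j) q₁(j) q₂(j)`, where `qᵢ(j) = P(j) / P(3j + i)`.
As `P` decreases, each `qᵢ` is at least `1`, hence so is `g`; moreover each `qᵢ` increases.
From `1 / b ≥ 2 - b` one obtains `Δ²g(j) ≥ ρ(j) - ρ(j - 1) ≥ q₁(j) - q₁(j - 1)`, and the last
difference has a closed form exceeding that of `Δ²h(j)`.
-/

/-- `h_l(j) = (l+j)/(l-j)` as a rational number. -/
def hFn (l j : ℕ) : ℚ := ((l : ℚ) + j) / ((l : ℚ) - j)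

/-- `d_l(j) = g_l(j) − h_l(j)`. -/
def dFn (l j : ℕ) : ℚ := gFn l j - hFn l j

open Finset

lemma sub_le_prod_sub_prod {ι R : Type*} [CommRing R] [LinearOrder R] [IsStrictOrderedRing R]
    {s : Finset ι} {f g : ι → R} (hg : ∀ i ∈ s, 1 ≤ g i) (hfg : ∀ i ∈ s, g i ≤ f i)
    {i : ι} (hi : i ∈ s) : f i - g i ≤ ∏ j ∈ s, f j - ∏ j ∈ s, g j := by
  classical
  rw [← mul_prod_erase s f hi, ← mul_prod_erase s g hi]
  set F := ∏ j ∈ s.erase i, f j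
  set G := ∏ j ∈ s.erase i, g j
  have hG : 1 ≤ G := Finset.one_le_prod fun j hj ↦ hg j (mem_of_mem_erase hj)
  have hGF : G ≤ F := Finset.prod_le_prod
    (fun j hj ↦ zero_le_one.trans (hg j (mem_of_mem_erase hj)))
    (fun j hj ↦ hfg j (mem_of_mem_erase hj))
  have hf : 0 ≤ f i := zero_le_one.trans ((hg i hi).trans (hfg i hi))
  calc f i - g i ≤ (f i - g i) * G := le_mul_of_one_le_right (sub_nonneg.2 (hfg i hi)) hG
    _ = f i * G - g i * G := sub_mul _ _ _
    _ ≤ f i * F - g i * G := by gcongr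

section LadderFactor

variable {R : Type*} [CommRing R]

/-- The factor `(l - a)(l + a + 1) = l(l + 1) - a(a + 1)`, familiar from the action of ladder
operators on a spin-`l` representation. The products of these over `a < n` are the descending
factorials from which `gFn` is built. -/
def ladderFactor (l a : R) : R := (l - a) * (l + a + 1)

lemma ladderFactor_sub_ladderFactor (l a b : R) :
    ladderFactor l a - ladderFactor l b = (b - a) * (a + b + 1) := by
  unfold ladderFactor
  ring

lemma prod_ladderFactor_eq_descFactorial (l n : ℕ) :
    ∏ a ∈ range n, ladderFactor (l : R) a = (l + n).descFactorial (2 * n) := by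
  induction n with
  | zero => simp
  | succ n ih =>
    have hstep : (l + (n + 1)).descFactorial (2 * (n + 1)) =
        (l + n + 1) * ((l - n) * (l + n).descFactorial (2 * n)) := by
      rw [show l + (n + 1) = l + n + 1 by ring, show 2 * (n + 1) = 2 * n + 1 + 1 by ring,
        Nat.succ_descFactorial_succ, Nat.descFactorial_succ, show l + n - 2 * n = l - n by omega]
    rw [prod_range_succ, ih, hstep, ladderFactor]
    rcases le_or_gt n l with hn | hn
    · push_cast [hn]
      ring
    · simp [Nat.descFactorial_of_lt (show l + n < 2 * n by omega)]

variable [LinearOrder R] [IsStrictOrderedRing R] {l a b : R}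

lemma ladderFactor_pos (ha : 0 ≤ a) (hal : a < l) : 0 < ladderFactor l a :=
  mul_pos (by linarith) (by linarith)

lemma ladderFactor_le_ladderFactor (ha : 0 ≤ a) (hab : a ≤ b) :
    ladderFactor l b ≤ ladderFactor l a := by
  rw [← sub_nonneg, ladderFactor_sub_ladderFactor]
  exact mul_nonneg (by linarith) (by linarith)

end LadderFactor

section LadderRatio

variable {K : Type*} [Field K]

/-- The quotient `qᵢ(k) = P(k) / P(3k + i)` of ladder factors `P(a) = (l - a)(l + a + 1)`. The
argument `k` ranges over the field, so that closed forms in `k` are plain field identities. -/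
def ladderQuot (l k : K) (i : ℕ) : K := ladderFactor l k / ladderFactor l (3 * k + i)

/-- The ratio `ρ(k) = q₀(k) q₁(k) q₂(k)` of consecutive values `gFn l (k + 1) / gFn l k`. -/
def ladderRatio (l k : K) : K := ∏ i ∈ range 3, ladderQuot l k i

lemma ladderQuot_one_succ_sub {l k : K} (h₁ : ladderFactor l (3 * k + 1) ≠ 0)
    (h₄ : ladderFactor l (3 * k + 4) ≠ 0) :
    ladderQuot l (k + 1) 1 - ladderQuot l k 1 =
      4 * (k + 1) * (2 * l + 1) ^ 2 /
        (ladderFactor l (3 * k + 4) * ladderFactor l (3 * k + 1)) := by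
  rw [ladderQuot, ladderQuot, Nat.cast_one, show 3 * (k + 1) + 1 = 3 * k + 4 by ring,
    div_sub_div _ _ h₄ h₁]
  congr 1
  unfold ladderFactor
  ring

variable [LinearOrder K] [IsStrictOrderedRing K] {l k : K}

lemma one_le_ladderQuot {i : ℕ} (hk : 0 ≤ k) (hl : 3 * k + i < l) : 1 ≤ ladderQuot l k i := by
  have : (0 : K) ≤ i := i.cast_nonneg
  exact (one_le_div (ladderFactor_pos (by linarith) hl)).2
    (ladderFactor_le_ladderFactor hk (by linarith))

lemma ladderQuot_le_succ {i : ℕ} (hk : 0 ≤ k) (hl : 3 * (k + 1) + i < l) :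
    ladderQuot l k i ≤ ladderQuot l (k + 1) i := by
  have : (0 : K) ≤ i := i.cast_nonneg
  set b : K := 3 * k + i with hb
  have hb' : 3 * (k + 1) + i = b + 3 := by rw [hb]; ring
  have hpos : 0 < ladderFactor l (b + 3) := ladderFactor_pos (by linarith) (by linarith)
  have hle : ladderFactor l (b + 3) ≤ ladderFactor l (k + 1) :=
    ladderFactor_le_ladderFactor (by linarith) (by linarith)
  have hnum : ladderFactor l k = ladderFactor l (k + 1) + 2 * (k + 1) := by
    linear_combination ladderFactor_sub_ladderFactor l k (k + 1)
  have hden : ladderFactor l b = ladderFactor l (b + 3) + 6 * (b + 2) := by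
    linear_combination ladderFactor_sub_ladderFactor l b (b + 3)
  have hincr : 2 * (k + 1) * ladderFactor l (b + 3) ≤ 6 * (b + 2) * ladderFactor l (k + 1) :=
    mul_le_mul (by linarith) hle hpos.le (by linarith)
  rw [ladderQuot, ladderQuot, hb', div_le_div_iff₀ (by rw [hden]; linarith) hpos, hnum, hden]
  linarith

lemma one_le_ladderRatio (hk : 0 ≤ k) (hl : 3 * k + 2 < l) : 1 ≤ ladderRatio l k := by
  refine Finset.one_le_prod fun i hi ↦ one_le_ladderQuot hk ?_
  have : (i : K) ≤ 2 := by exact_mod_cast Nat.le_of_lt_succ (mem_range.1 hi)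
  linarith

lemma ladderQuot_sub_le_ladderRatio_sub (hk : 0 ≤ k) (hl : 3 * k + 5 < l) {i : ℕ}
    (hi : i ∈ range 3) :
    ladderQuot l (k + 1) i - ladderQuot l k i ≤ ladderRatio l (k + 1) - ladderRatio l k := by
  have hcast : ∀ i ∈ range 3, (i : K) ≤ 2 := fun i hi ↦ by
    exact_mod_cast Nat.le_of_lt_succ (mem_range.1 hi)
  exact sub_le_prod_sub_prod
    (fun i hi ↦ one_le_ladderQuot hk (by linarith [hcast i hi]))
    (fun i hi ↦ ladderQuot_le_succ hk (by linarith [hcast i hi])) hi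

lemma ladderRatio_le_succ (hk : 0 ≤ k) (hl : 3 * k + 5 < l) :
    ladderRatio l k ≤ ladderRatio l (k + 1) := by
  have hquot : ladderQuot l k 0 ≤ ladderQuot l (k + 1) 0 :=
    ladderQuot_le_succ hk (by rw [Nat.cast_zero]; linarith)
  exact sub_nonneg.1 <| (sub_nonneg.2 hquot).trans <|
    ladderQuot_sub_le_ladderRatio_sub hk hl (by simp)

lemma ladderFactor_mul_ladderFactor_lt (hk : 0 ≤ k) (hl : 3 * k + 6 ≤ l) :
    ladderFactor l (3 * k + 4) * ladderFactor l (3 * k + 1) <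
      4 * (k + 1) * (l + 1) * ((l - k) * (l - k - 1) * (l - k - 2)) := by
  have hdiff : (l - 3 * k - 4) * (l - 3 * k - 1) ≤ (l - k - 2) * (l - k - 1) :=
    mul_le_mul (by linarith) (by linarith) (by linarith) (by linarith)
  have hsum : (l + 3 * k + 5) * (l + 3 * k + 2) < 2 * (l + 1) * (2 * l) :=
    mul_lt_mul'' (by linarith) (by linarith) (by linarith) (by linarith)
  have hlin : l ≤ (k + 1) * (l - k) := by
    linarith [mul_nonneg hk (show 0 ≤ l - k - 1 by linarith)]
  have hdpos : 0 < (l - k - 2) * (l - k - 1) := mul_pos (by linarith) (by linarith)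
  have hspos : 0 ≤ (l + 3 * k + 5) * (l + 3 * k + 2) := mul_nonneg (by linarith) (by linarith)
  have hlpos : 0 ≤ 4 * (l + 1) := by linarith
  calc ladderFactor l (3 * k + 4) * ladderFactor l (3 * k + 1)
      = (l - 3 * k - 4) * (l - 3 * k - 1) * ((l + 3 * k + 5) * (l + 3 * k + 2)) := by
        unfold ladderFactor; ring
    _ ≤ (l - k - 2) * (l - k - 1) * ((l + 3 * k + 5) * (l + 3 * k + 2)) := by gcongr
    _ < (l - k - 2) * (l - k - 1) * (2 * (l + 1) * (2 * l)) := by gcongr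
    _ = (l - k - 2) * (l - k - 1) * (4 * (l + 1) * l) := by ring
    _ ≤ (l - k - 2) * (l - k - 1) * (4 * (l + 1) * ((k + 1) * (l - k))) := by gcongr
    _ = 4 * (k + 1) * (l + 1) * ((l - k) * (l - k - 1) * (l - k - 2)) := by ring

lemma lt_ladderQuot_one_succ_sub (hk : 0 ≤ k) (hl : 3 * k + 6 ≤ l) :
    4 * l / ((l - k) * (l - k - 1) * (l - k - 2)) < ladderQuot l (k + 1) 1 - ladderQuot l k 1 := by
  have h₁ : 0 < ladderFactor l (3 * k + 1) := ladderFactor_pos (by linarith) (by linarith)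
  have h₄ : 0 < ladderFactor l (3 * k + 4) := ladderFactor_pos (by linarith) (by linarith)
  have hden : 0 < (l - k) * (l - k - 1) * (l - k - 2) :=
    mul_pos (mul_pos (by linarith) (by linarith)) (by linarith)
  have hlpos : 0 < 4 * l := by linarith
  have hsq : 4 * l * (l + 1) ≤ (2 * l + 1) ^ 2 := by linarith
  have hlt := ladderFactor_mul_ladderFactor_lt hk hl
  rw [ladderQuot_one_succ_sub h₁.ne' h₄.ne', div_lt_div_iff₀ hden (mul_pos h₄ h₁)]
  calc 4 * l * (ladderFactor l (3 * k + 4) * ladderFactor l (3 * k + 1))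
      < 4 * l * (4 * (k + 1) * (l + 1) * ((l - k) * (l - k - 1) * (l - k - 2))) :=
        mul_lt_mul_of_pos_left hlt hlpos
    _ = 4 * (k + 1) * (4 * l * (l + 1)) * ((l - k) * (l - k - 1) * (l - k - 2)) := by ring
    _ ≤ 4 * (k + 1) * (2 * l + 1) ^ 2 * ((l - k) * (l - k - 1) * (l - k - 2)) := by gcongr

end LadderRatio

section SecondDifferences

variable {l k : ℕ}

lemma gFn_eq_prod_ladderFactor (h : k ≤ l) :
    gFn l k = (∏ a ∈ range k, ladderFactor (l : ℚ) a) ^ 3 /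
      ∏ a ∈ range (3 * k), ladderFactor (l : ℚ) a := by
  have hsplit : (l + 3 * k).descFactorial (2 * (3 * k)) =
      (l + 3 * k).descFactorial (2 * k) * (l - k).descFactorial (2 * k) *
        (l + k).descFactorial (2 * k) := by
    rw [← Nat.descFactorial_mul_descFactorial (show 2 * k ≤ 2 * (3 * k) by omega),
      ← Nat.descFactorial_mul_descFactorial (show 2 * k ≤ 2 * (3 * k) - 2 * k by omega),
      show l + 3 * k - 2 * k = l + k by omega, show l + k - 2 * k = l - k by omega,
      show 2 * (3 * k) - 2 * k - 2 * k = 2 * k by omega]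
    ring
  have hne : ((l + k).descFactorial (2 * k) : ℚ) ≠ 0 := by
    exact_mod_cast (Nat.descFactorial_pos.2 (by omega)).ne'
  rw [prod_ladderFactor_eq_descFactorial, prod_ladderFactor_eq_descFactorial, hsplit, pow_succ,
    Nat.cast_mul, Nat.cast_mul, mul_div_mul_right _ _ hne, gFn]

lemma gFn_succ_s6 (h : k < l) : gFn l (k + 1) = ladderRatio (l : ℚ) k * gFn l k := by
  have hratio : ladderRatio (l : ℚ) k =
      ladderFactor (l : ℚ) k ^ 3 / ∏ i ∈ range 3, ladderFactor (l : ℚ) (3 * k + i : ℕ) := by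
    simp [ladderRatio, ladderQuot, prod_div_distrib]
  rw [gFn_eq_prod_ladderFactor (k := k + 1) h, gFn_eq_prod_ladderFactor h.le, hratio,
    prod_range_succ, mul_add_one, prod_range_add, mul_pow, div_mul_div_comm, mul_comm (_ ^ 3),
    mul_comm (∏ a ∈ range (3 * k), _)]

lemma one_le_gFn (h : 3 * k ≤ l) : 1 ≤ gFn l k := by
  induction k with
  | zero => simp [gFn]
  | succ k ih =>
    have hl : (3 * k + 2 : ℚ) < l := by exact_mod_cast (by omega : 3 * k + 2 < l)
    rw [gFn_succ_s6 (by omega)]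
    exact one_le_mul_of_one_le_of_one_le (one_le_ladderRatio k.cast_nonneg hl) (ih (by omega))

lemma ladderRatio_sub_le_secondDiff_gFn (h : 3 * (k + 2) ≤ l) :
    ladderRatio (l : ℚ) (k + 1) - ladderRatio (l : ℚ) k ≤
      gFn l (k + 2) - 2 * gFn l (k + 1) + gFn l k := by
  have hmono : ladderRatio (l : ℚ) k ≤ ladderRatio (l : ℚ) (k + 1) :=
    ladderRatio_le_succ k.cast_nonneg (by exact_mod_cast (by omega : 3 * k + 5 < l))
  have hstep₀ : gFn l (k + 1) = ladderRatio (l : ℚ) k * gFn l k := gFn_succ_s6 (by omega)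
  have hstep₁ : gFn l (k + 2) = ladderRatio (l : ℚ) (k + 1) * gFn l (k + 1) := by
    exact_mod_cast gFn_succ_s6 (l := l) (k := k + 1) (by omega)
  have hg₁ : 1 ≤ gFn l (k + 1) := one_le_gFn (by omega)
  have hg₀ : 0 ≤ gFn l k := zero_le_one.trans (one_le_gFn (by omega))
  set ρ₀ := ladderRatio (l : ℚ) k
  set ρ₁ := ladderRatio (l : ℚ) (k + 1)
  calc ρ₁ - ρ₀ ≤ (ρ₁ - ρ₀) * gFn l (k + 1) := le_mul_of_one_le_right (sub_nonneg.2 hmono) hg₁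
    _ ≤ (ρ₁ - ρ₀) * gFn l (k + 1) + (ρ₀ - 1) ^ 2 * gFn l k :=
      le_add_of_nonneg_right (mul_nonneg (sq_nonneg _) hg₀)
    _ = gFn l (k + 2) - 2 * gFn l (k + 1) + gFn l k := by rw [hstep₁, hstep₀]; ring

lemma secondDiff_hFn (h : k + 2 < l) :
    hFn l (k + 2) - 2 * hFn l (k + 1) + hFn l k =
      4 * l / (((l : ℚ) - k) * (l - k - 1) * (l - k - 2)) := by
  have hl : (k + 2 : ℚ) < l := by exact_mod_cast h
  have h₀ : (l - k : ℚ) ≠ 0 := ne_of_gt (by linarith)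
  have h₁ : (l - k - 1 : ℚ) ≠ 0 := ne_of_gt (by linarith)
  have h₂ : (l - k - 2 : ℚ) ≠ 0 := ne_of_gt (by linarith)
  simp only [hFn, Nat.cast_add, Nat.cast_one, Nat.cast_ofNat, ← sub_sub]
  field_simp
  ring

end SecondDifferences

/-- For every integer `l ≥ 6` and every integer `j` with `1 ≤ j ≤ ⌊l/3⌋ − 1`, the function
`d_l(j) = g_l(j) − h_l(j)` has strictly positive second-order finite differences:
`Δ²d_l(j) = d_l(j+1) − 2 d_l(j) + d_l(j−1) > 0`. -/
theorem stmt6 (l : ℕ) (hl : 6 ≤ l) (j : ℕ) (hj1 : 1 ≤ j) (hj2 : j ≤ l / 3 - 1) :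
    0 < dFn l (j + 1) - 2 * dFn l j + dFn l (j - 1) := by
  obtain ⟨k, rfl⟩ := Nat.exists_eq_add_of_le' hj1
  have hkl : (3 * k + 6 : ℚ) ≤ l := by exact_mod_cast (by omega : 3 * k + 6 ≤ l)
  have hk : (0 : ℚ) ≤ k := k.cast_nonneg
  have hquot := lt_ladderQuot_one_succ_sub hk hkl
  have hratio := ladderQuot_sub_le_ladderRatio_sub hk (by linarith : (3 * k + 5 : ℚ) < l)
    (i := 1) (by simp)
  have hg := ladderRatio_sub_le_secondDiff_gFn (l := l) (k := k) (by omega)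
  have hh := secondDiff_hFn (l := l) (k := k) (by omega)
  simp only [dFn, Nat.add_sub_cancel]
  linarith
end

section
/- For any real constants a and b with 0 ≤ a < 1 and b > 0, the function f_{a,b}(x) = 1/((a + b/x)² − 1) is strictly convex on the open interval (0, b/(1−a)); moreover it is positive and strictly increasing there, with derivative f′_{a,b}(x) = 2b(a x^{−2} + b x^{−3}) f_{a,b}(x)² > 0 and second derivative f″_{a,b}(x) > 0 on that interval. -/
/-!
Put `u = b + (a - 1) x` and `v = b + (a + 1) x`. Partial fractions give `f = (x / u - x / v) / 2`,
and `x / (b + k x)` has derivative `b / (b + k x) ^ 2`, so that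
`f' = b / 2 * (1 / u ^ 2 - 1 / v ^ 2)` and `f'' = b * ((1 - a) / u ^ 3 + (1 + a) / v ^ 3)`.
On the interval `0 < u < v`, which makes `f` and `f'` positive. In `f''` the second term may be
negative, but replacing `u` by `v` decreases the sum to `2 / v ^ 3 > 0`.
-/

open Set Topology

/-- The function `f_{a,b}(x) = 1 / ((a + b / x) ^ 2 - 1)`, over an arbitrary field, since its
partial fractions need no order or topology. The value at `x = 0` is a junk value. -/
def invSqSubOne {K : Type*} [Field K] (a b x : K) : K :=
  1 / ((a + b / x) ^ 2 - 1)

section Field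

variable {K : Type*} [Field K] {a b x : K}

lemma invSqSubOne_eq_div (hx : x ≠ 0) :
    invSqSubOne a b x = x ^ 2 / ((b + (a - 1) * x) * (b + (a + 1) * x)) := by
  have factor : (a + b / x) ^ 2 - 1 = (b + (a - 1) * x) * (b + (a + 1) * x) / x ^ 2 := by
    field_simp
    ring
  rw [invSqSubOne, factor, one_div_div]

variable [NeZero (2 : K)]

lemma invSqSubOne_eq_sub (hx : x ≠ 0) (hu : b + (a - 1) * x ≠ 0) (hv : b + (a + 1) * x ≠ 0) :
    invSqSubOne a b x = (x / (b + (a - 1) * x) - x / (b + (a + 1) * x)) / 2 := by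
  rw [invSqSubOne_eq_div hx, div_sub_div _ _ hu hv, div_div,
    div_eq_div_iff (mul_ne_zero hu hv) (mul_ne_zero (mul_ne_zero hu hv) two_ne_zero)]
  ring

end Field

section Deriv

variable {𝕜 : Type*} [NontriviallyNormedField 𝕜] {a b k x : 𝕜}

lemma hasDerivAt_const_add_mul (b k x : 𝕜) : HasDerivAt (fun y ↦ b + k * y) k x := by
  simpa only [mul_one] using ((hasDerivAt_id' x).const_mul k).const_add b

lemma hasDerivAt_div_const_add_mul (h : b + k * x ≠ 0) :
    HasDerivAt (fun y ↦ y / (b + k * y)) (b / (b + k * x) ^ 2) x :=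
  ((hasDerivAt_id' x).fun_div (hasDerivAt_const_add_mul b k x) h).congr_deriv (by ring)

lemma hasDerivAt_one_div_const_add_mul_sq (h : b + k * x ≠ 0) :
    HasDerivAt (fun y ↦ 1 / (b + k * y) ^ 2) (-2 * k / (b + k * x) ^ 3) x :=
  ((hasDerivAt_const x 1).fun_div ((hasDerivAt_const_add_mul b k x).fun_pow 2)
    (pow_ne_zero 2 h)).congr_deriv (by field_simp; ring)

lemma eventually_const_add_mul_ne_zero (h : b + k * x ≠ 0) : ∀ᶠ y in 𝓝 x, b + k * y ≠ 0 :=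
  (hasDerivAt_const_add_mul b k x).continuousAt.eventually_ne h

variable [NeZero (2 : 𝕜)]

lemma hasDerivAt_invSqSubOne (hx : x ≠ 0) (hu : b + (a - 1) * x ≠ 0)
    (hv : b + (a + 1) * x ≠ 0) :
    HasDerivAt (invSqSubOne a b)
      (b / 2 * (1 / (b + (a - 1) * x) ^ 2 - 1 / (b + (a + 1) * x) ^ 2)) x := by
  have partial_fractions : invSqSubOne a b =ᶠ[𝓝 x]
      fun y ↦ (y / (b + (a - 1) * y) - y / (b + (a + 1) * y)) / 2 := by
    filter_upwards [eventually_ne_nhds hx, eventually_const_add_mul_ne_zero hu,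
      eventually_const_add_mul_ne_zero hv] with y hy huy hvy
    exact invSqSubOne_eq_sub hy huy hvy
  exact ((((hasDerivAt_div_const_add_mul hu).fun_sub
    (hasDerivAt_div_const_add_mul hv)).div_const 2).congr_of_eventuallyEq
      partial_fractions).congr_deriv (by ring)

lemma deriv_invSqSubOne (hx : x ≠ 0) (hu : b + (a - 1) * x ≠ 0) (hv : b + (a + 1) * x ≠ 0) :
    deriv (invSqSubOne a b) x = 2 * b * (a / x ^ 2 + b / x ^ 3) * invSqSubOne a b x ^ 2 := by
  have h2 : (2 : 𝕜) ≠ 0 := two_ne_zero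
  rw [(hasDerivAt_invSqSubOne hx hu hv).deriv, invSqSubOne_eq_div hx,
    div_sub_div _ _ (pow_ne_zero 2 hu) (pow_ne_zero 2 hv), div_pow, mul_pow]
  field_simp
  ring

lemma hasDerivAt_deriv_invSqSubOne (hx : x ≠ 0) (hu : b + (a - 1) * x ≠ 0)
    (hv : b + (a + 1) * x ≠ 0) :
    HasDerivAt (deriv (invSqSubOne a b))
      (b * ((1 - a) / (b + (a - 1) * x) ^ 3 + (1 + a) / (b + (a + 1) * x) ^ 3)) x := by
  have h2 : (2 : 𝕜) ≠ 0 := two_ne_zero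
  have deriv_eq : deriv (invSqSubOne a b) =ᶠ[𝓝 x]
      fun y ↦ b / 2 * (1 / (b + (a - 1) * y) ^ 2 - 1 / (b + (a + 1) * y) ^ 2) := by
    filter_upwards [eventually_ne_nhds hx, eventually_const_add_mul_ne_zero hu,
      eventually_const_add_mul_ne_zero hv] with y hy huy hvy
    exact (hasDerivAt_invSqSubOne hy huy hvy).deriv
  exact ((((hasDerivAt_one_div_const_add_mul_sq hu).fun_sub
    (hasDerivAt_one_div_const_add_mul_sq hv)).const_mul (b / 2)).congr_of_eventuallyEq
      deriv_eq).congr_deriv (by field_simp; ring)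

end Deriv

section OrderedField

variable {K : Type*} [Field K] [LinearOrder K] [IsStrictOrderedRing K] {a b x : K}

lemma add_sub_one_mul_pos (ha : a < 1) (hx : x < b / (1 - a)) : 0 < b + (a - 1) * x := by
  have := (lt_div_iff₀ (sub_pos.2 ha)).1 hx
  linarith

lemma invSqSubOne_pos (hx : 0 < x) (hu : 0 < b + (a - 1) * x) : 0 < invSqSubOne a b x := by
  have huv : b + (a - 1) * x < b + (a + 1) * x := by linarith
  rw [invSqSubOne_eq_sub hx.ne' hu.ne' (hu.trans huv).ne']
  exact half_pos (sub_pos.2 (div_lt_div_of_pos_left hx hu huv))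

end OrderedField

section Real

variable {a b x : ℝ}

lemma deriv_invSqSubOne_pos (hb : 0 < b) (hx : 0 < x) (hu : 0 < b + (a - 1) * x) :
    0 < deriv (invSqSubOne a b) x := by
  have huv : b + (a - 1) * x < b + (a + 1) * x := by linarith
  rw [(hasDerivAt_invSqSubOne hx.ne' hu.ne' (hu.trans huv).ne').deriv]
  have : 1 / (b + (a + 1) * x) ^ 2 < 1 / (b + (a - 1) * x) ^ 2 := by gcongr
  exact mul_pos (half_pos hb) (sub_pos.2 this)

lemma deriv_deriv_invSqSubOne_pos (ha : a < 1) (hx : 0 < x) (hu : 0 < b + (a - 1) * x) :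
    0 < deriv (deriv (invSqSubOne a b)) x := by
  have hb : 0 < b := by linarith [mul_pos (sub_pos.2 ha) hx]
  have huv : b + (a - 1) * x < b + (a + 1) * x := by linarith
  have hv : 0 < b + (a + 1) * x := hu.trans huv
  rw [(hasDerivAt_deriv_invSqSubOne hx.ne' hu.ne' hv.ne').deriv]
  refine mul_pos hb ?_
  calc 0 < 2 / (b + (a + 1) * x) ^ 3 := by positivity
    _ = (1 - a) / (b + (a + 1) * x) ^ 3 + (1 + a) / (b + (a + 1) * x) ^ 3 := by ring
    _ < (1 - a) / (b + (a - 1) * x) ^ 3 + (1 + a) / (b + (a + 1) * x) ^ 3 := by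
      have := sub_pos.2 ha
      gcongr

end Real

theorem stmt9_general (a b : ℝ) (ha : a < 1) :
    StrictConvexOn ℝ (Ioo 0 (b / (1 - a))) (invSqSubOne a b) ∧
    (∀ x ∈ Ioo 0 (b / (1 - a)), 0 < invSqSubOne a b x) ∧
    StrictMonoOn (invSqSubOne a b) (Ioo 0 (b / (1 - a))) ∧
    (∀ x ∈ Ioo 0 (b / (1 - a)),
      deriv (invSqSubOne a b) x = 2 * b * (a / x ^ 2 + b / x ^ 3) * invSqSubOne a b x ^ 2 ∧
      0 < deriv (invSqSubOne a b) x) ∧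
    (∀ x ∈ Ioo 0 (b / (1 - a)), 0 < deriv (deriv (invSqSubOne a b)) x) := by
  have hb : ∀ x ∈ Ioo 0 (b / (1 - a)), 0 < b := fun x hx ↦
    (div_pos_iff_of_pos_right (sub_pos.2 ha)).1 (hx.1.trans hx.2)
  have hu : ∀ x ∈ Ioo 0 (b / (1 - a)), 0 < b + (a - 1) * x := fun x hx ↦
    add_sub_one_mul_pos ha hx.2
  have hv : ∀ x ∈ Ioo 0 (b / (1 - a)), 0 < b + (a + 1) * x := fun x hx ↦ by
    linarith [hu x hx, hx.1]
  have hcont : ContinuousOn (invSqSubOne a b) (Ioo 0 (b / (1 - a))) :=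
    HasDerivAt.continuousOn fun x hx ↦
      hasDerivAt_invSqSubOne hx.1.ne' (hu x hx).ne' (hv x hx).ne'
  have hpos' : ∀ x ∈ Ioo 0 (b / (1 - a)), 0 < deriv (invSqSubOne a b) x := fun x hx ↦
    deriv_invSqSubOne_pos (hb x hx) hx.1 (hu x hx)
  have hpos'' : ∀ x ∈ Ioo 0 (b / (1 - a)), 0 < deriv (deriv (invSqSubOne a b)) x := fun x hx ↦
    deriv_deriv_invSqSubOne_pos ha hx.1 (hu x hx)
  refine ⟨strictConvexOn_of_deriv2_pos (convex_Ioo _ _) hcont (by rwa [interior_Ioo]),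
    fun x hx ↦ invSqSubOne_pos hx.1 (hu x hx),
    strictMonoOn_of_deriv_pos (convex_Ioo _ _) hcont (by rwa [interior_Ioo]),
    fun x hx ↦ ⟨deriv_invSqSubOne hx.1.ne' (hu x hx).ne' (hv x hx).ne', hpos' x hx⟩, hpos''⟩

/-- For real constants `0 ≤ a < 1` and `b > 0`, the function
`f_{a,b}(x) = 1/((a + b/x)² − 1)` is strictly convex on `(0, b/(1−a))`; moreover it is
positive and strictly increasing there, its derivative equals
`2b(a x⁻² + b x⁻³) f_{a,b}(x)² > 0` and its second derivative is strictly positive there. -/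
theorem stmt9 (a b : ℝ) (ha0 : 0 ≤ a) (ha1 : a < 1) (hb : 0 < b) :
    StrictConvexOn ℝ (Set.Ioo 0 (b / (1 - a))) (fun x : ℝ => 1 / ((a + b / x) ^ 2 - 1)) ∧
    (∀ x ∈ Set.Ioo 0 (b / (1 - a)), 0 < 1 / ((a + b / x) ^ 2 - 1)) ∧
    StrictMonoOn (fun x : ℝ => 1 / ((a + b / x) ^ 2 - 1)) (Set.Ioo 0 (b / (1 - a))) ∧
    (∀ x ∈ Set.Ioo 0 (b / (1 - a)),
      deriv (fun x : ℝ => 1 / ((a + b / x) ^ 2 - 1)) x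
          = 2 * b * (a / x ^ 2 + b / x ^ 3) * (1 / ((a + b / x) ^ 2 - 1)) ^ 2 ∧
      0 < deriv (fun x : ℝ => 1 / ((a + b / x) ^ 2 - 1)) x) ∧
    (∀ x ∈ Set.Ioo 0 (b / (1 - a)),
      0 < deriv (deriv (fun x : ℝ => 1 / ((a + b / x) ^ 2 - 1))) x) :=
  stmt9_general a b ha1
end

section
/- Along positive integers a → ∞, with l = 4a², the following asymptotic expansions hold: log g_{4a²}(a+1) = 1/(2a) + 3/(2a²) + 47/(32a³) + 19/(32a⁴) + O(a^{−5}) and log h_{4a²}(a+1) = 1/(2a) + 1/(2a²) + 1/(96a³) + 1/(32a⁴) + O(a^{−5}). In particular, for all sufficiently large a, g_{4a²}(a+1) > h_{4a²}(a+1). -/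
open Filter Asymptotics

/-!
Pairing the factors of the three descending factorials writes `log g_l(j)` as the sum over
`-j < m ≤ j` of the negated second differences of `log` at `1 + m/l` with step `2j/l`. A fifth-order
Taylor expansion of `log` at `1` makes each of them a polynomial in `m/l` and `2j/l`, up to
`O((j/l)⁶)`, and the sums of powers of `m` are explicit. For `l = 4a²` and `j = a + 1` the ratio
`j/l` has order `1/a`, so the `2j` errors add up to `O(a⁻⁵)`. For `h_l(j)` one expands
`log ((1 + x) / (1 - x))` at `x = j/l`. The two expansions first differ at order `a⁻²`, where the
one of `g` is larger.
-/

open scoped Topology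

theorem sum_range_two_mul_succ_sub (f : ℝ → ℝ) (j : ℕ) :
    ∑ i ∈ Finset.range (2 * (j + 1)), f (((j + 1 : ℕ) : ℝ) - i)
      = f (j + 1) + ∑ i ∈ Finset.range (2 * j), f (j - i) + f (-j) := by
  have hlast : (j : ℝ) + 1 - (2 * j + 1) = -j := by ring
  rw [mul_add_one, Finset.sum_range_succ, Finset.sum_range_succ']
  push_cast
  simp only [add_sub_add_right_eq_sub, sub_zero, hlast]
  ring

theorem sum_range_two_mul_sub (j : ℕ) :
    ∑ i ∈ Finset.range (2 * j), ((j : ℝ) - i) = j := by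
  induction j with
  | zero => simp
  | succ j ih => rw [sum_range_two_mul_succ_sub fun x => x, ih]; push_cast; ring

theorem sum_range_two_mul_sub_sq (j : ℕ) :
    ∑ i ∈ Finset.range (2 * j), ((j : ℝ) - i) ^ 2 = j * (2 * j ^ 2 + 1) / 3 := by
  induction j with
  | zero => simp
  | succ j ih => rw [sum_range_two_mul_succ_sub fun x => x ^ 2, ih]; push_cast; ring

theorem sum_range_two_mul_sub_cube (j : ℕ) :
    ∑ i ∈ Finset.range (2 * j), ((j : ℝ) - i) ^ 3 = j ^ 3 := by
  induction j with
  | zero => simp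
  | succ j ih => rw [sum_range_two_mul_succ_sub fun x => x ^ 3, ih]; push_cast; ring

theorem abs_log_one_add_sub_taylor_le {x r : ℝ} (hx : |x| ≤ r) (hr : r ≤ 1 / 2) :
    |Real.log (1 + x) - (x - x ^ 2 / 2 + x ^ 3 / 3 - x ^ 4 / 4 + x ^ 5 / 5)| ≤ 2 * r ^ 6 := by
  have taylor := Real.abs_log_sub_add_sum_range_le (x := -x) (by rw [abs_neg]; linarith) 5
  simp only [Finset.sum_range_succ, Finset.sum_range_zero, abs_neg] at taylor
  calc |Real.log (1 + x) - (x - x ^ 2 / 2 + x ^ 3 / 3 - x ^ 4 / 4 + x ^ 5 / 5)|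
      ≤ |x| ^ 6 / (1 - |x|) := by
        convert taylor using 2
        push_cast
        ring_nf
    _ ≤ r ^ 6 / (1 / 2) := by gcongr; linarith
    _ = 2 * r ^ 6 := by ring

/-- The negated second difference of `log` at `1 + x` with step `δ`: the contribution of one factor
of each descending factorial to `log (gFn l j)`. -/
noncomputable def logSecondDiff (x δ : ℝ) : ℝ :=
  2 * Real.log (1 + x) - Real.log (1 + (x + δ)) - Real.log (1 + (x - δ))

/-- The Taylor polynomial of `logSecondDiff x δ` of total degree five in `(x, δ)`. -/
noncomputable def logSecondDiffTaylor (x δ : ℝ) : ℝ :=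
  δ ^ 2 * (1 - 2 * x + 3 * x ^ 2 - 4 * x ^ 3) + δ ^ 4 * (1 / 2 - 2 * x)

theorem abs_logSecondDiff_sub_taylor_le {x δ r : ℝ} (hx : |x| ≤ r) (hadd : |x + δ| ≤ r)
    (hsub : |x - δ| ≤ r) (hr : r ≤ 1 / 2) :
    |logSecondDiff x δ - logSecondDiffTaylor x δ| ≤ 8 * r ^ 6 := by
  let p (y : ℝ) : ℝ := y - y ^ 2 / 2 + y ^ 3 / 3 - y ^ 4 / 4 + y ^ 5 / 5
  have hp : logSecondDiffTaylor x δ = 2 * p x - p (x + δ) - p (x - δ) := by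
    simp only [logSecondDiffTaylor, p]
    ring
  have taylor {y : ℝ} (hy : |y| ≤ r) :
      -(2 * r ^ 6) ≤ Real.log (1 + y) - p y ∧ Real.log (1 + y) - p y ≤ 2 * r ^ 6 :=
    abs_le.1 (abs_log_one_add_sub_taylor_le hy hr)
  obtain ⟨lower, upper⟩ := taylor hx
  obtain ⟨lower_add, upper_add⟩ := taylor hadd
  obtain ⟨lower_sub, upper_sub⟩ := taylor hsub
  rw [hp, logSecondDiff, abs_le]
  constructor <;> linarith

theorem logSecondDiff_div {l x δ : ℝ} (hl : 0 < l) (hx : 0 < l + x) (hadd : 0 < l + (x + δ))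
    (hsub : 0 < l + (x - δ)) :
    logSecondDiff (x / l) (δ / l)
      = 2 * Real.log (l + x) - Real.log (l + (x + δ)) - Real.log (l + (x - δ)) := by
  have log_rescale {y : ℝ} (hy : 0 < l + y) :
      Real.log (1 + y / l) = Real.log (l + y) - Real.log l := by
    rw [← Real.log_div hy.ne' hl.ne', add_div, div_self hl.ne']
  rw [logSecondDiff, ← add_div, ← sub_div, log_rescale hx, log_rescale hadd, log_rescale hsub]
  ring

theorem log_descFactorial {n k : ℕ} (h : k ≤ n) :
    Real.log (n.descFactorial k) = ∑ i ∈ Finset.range k, Real.log ((n : ℝ) - i) := by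
  have hlt {i : ℕ} (hi : i ∈ Finset.range k) : i < n := (Finset.mem_range.1 hi).trans_le h
  rw [Nat.descFactorial_eq_prod_range, Nat.cast_prod,
    Real.log_prod fun i hi => Nat.cast_ne_zero.2 (Nat.sub_pos_of_lt (hlt hi)).ne']
  exact Finset.sum_congr rfl fun i hi => by rw [Nat.cast_sub (hlt hi).le]

theorem gFn_pos {l j : ℕ} (h : 3 * j ≤ l) : 0 < gFn l j := by
  have hmid : 0 < (l + j).descFactorial (2 * j) := Nat.descFactorial_pos.2 (by lia)
  have hupper : 0 < (l + 3 * j).descFactorial (2 * j) := Nat.descFactorial_pos.2 (by lia)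
  have hlower : 0 < (l - j).descFactorial (2 * j) := Nat.descFactorial_pos.2 (by lia)
  unfold gFn
  positivity

theorem log_gFn_eq_log_descFactorial {l j : ℕ} (h : 3 * j ≤ l) :
    Real.log (gFn l j) = 2 * Real.log ((l + j).descFactorial (2 * j))
      - Real.log ((l + 3 * j).descFactorial (2 * j))
      - Real.log ((l - j).descFactorial (2 * j)) := by
  have hmid : (l + j).descFactorial (2 * j) ≠ 0 := (Nat.descFactorial_pos.2 (by lia)).ne'
  have hupper : (l + 3 * j).descFactorial (2 * j) ≠ 0 := (Nat.descFactorial_pos.2 (by lia)).ne'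
  have hlower : (l - j).descFactorial (2 * j) ≠ 0 := (Nat.descFactorial_pos.2 (by lia)).ne'
  unfold gFn
  push_cast
  rw [Real.log_div (by positivity) (by positivity), Real.log_pow,
    Real.log_mul (by positivity) (by positivity)]
  push_cast
  ring

theorem log_gFn_eq_sum_logSecondDiff {l j : ℕ} (h : 3 * j ≤ l) :
    Real.log (gFn l j)
      = ∑ i ∈ Finset.range (2 * j), logSecondDiff (((j : ℝ) - i) / l) (2 * j / l) := by
  rw [log_gFn_eq_log_descFactorial h, log_descFactorial (by lia), log_descFactorial (by lia),
    log_descFactorial (by lia), Finset.mul_sum, ← Finset.sum_sub_distrib, ← Finset.sum_sub_distrib]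
  refine Finset.sum_congr rfl fun i hi => ?_
  have hij : (i : ℝ) < 2 * j := by exact_mod_cast Finset.mem_range.1 hi
  have hjl : 3 * (j : ℝ) ≤ l := by exact_mod_cast h
  have : (0 : ℝ) ≤ i := i.cast_nonneg
  rw [logSecondDiff_div (by linarith) (by linarith) (by linarith) (by linarith),
    Nat.cast_sub (by lia)]
  push_cast
  ring_nf

/-- The main term of `log (gFn l j)` for small `j / l`: in `log_gFn_eq_sum_logSecondDiff` every
second difference is replaced by its Taylor polynomial. -/
noncomputable def logGFnTaylor (l j : ℕ) : ℝ :=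
  ∑ i ∈ Finset.range (2 * j), logSecondDiffTaylor (((j : ℝ) - i) / l) (2 * j / l)

theorem sum_logSecondDiffTaylor (l δ : ℝ) (j : ℕ) :
    ∑ i ∈ Finset.range (2 * j), logSecondDiffTaylor (((j : ℝ) - i) / l) δ
      = δ ^ 2 * (2 * j - 2 * j / l + j * (2 * j ^ 2 + 1) / l ^ 2 - 4 * j ^ 3 / l ^ 3)
        + δ ^ 4 * (j - 2 * j / l) := by
  have expand (i : ℕ) : logSecondDiffTaylor (((j : ℝ) - i) / l) δ
      = (δ ^ 2 + δ ^ 4 / 2) - (2 * δ ^ 2 + 2 * δ ^ 4) / l * (j - i)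
        + 3 * δ ^ 2 / l ^ 2 * (j - i) ^ 2 - 4 * δ ^ 2 / l ^ 3 * (j - i) ^ 3 := by
    unfold logSecondDiffTaylor
    ring
  rw [Finset.sum_congr rfl fun i _ => expand i, Finset.sum_sub_distrib, Finset.sum_add_distrib,
    Finset.sum_sub_distrib, ← Finset.mul_sum, ← Finset.mul_sum, ← Finset.mul_sum,
    sum_range_two_mul_sub, sum_range_two_mul_sub_sq, sum_range_two_mul_sub_cube,
    Finset.sum_const, Finset.card_range, nsmul_eq_mul]
  push_cast
  ring

theorem abs_log_gFn_sub_logGFnTaylor_le {l j : ℕ} (h : 6 * j ≤ l) :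
    |Real.log (gFn l j) - logGFnTaylor l j| ≤ 16 * j * (3 * j / l) ^ 6 := by
  rw [log_gFn_eq_sum_logSecondDiff (by lia), logGFnTaylor, ← Finset.sum_sub_distrib]
  have hterm : ∀ i ∈ Finset.range (2 * j),
      |logSecondDiff (((j : ℝ) - i) / l) (2 * j / l)
        - logSecondDiffTaylor (((j : ℝ) - i) / l) (2 * j / l)| ≤ 8 * (3 * j / l) ^ 6 := by
    intro i hi
    have hij : (i : ℝ) < 2 * j := by exact_mod_cast Finset.mem_range.1 hi
    have hjl : 6 * (j : ℝ) ≤ l := by exact_mod_cast h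
    have : (0 : ℝ) ≤ i := i.cast_nonneg
    have hl : (0 : ℝ) < l := by linarith
    have abs_div_le {y : ℝ} (hy : |y| ≤ 3 * j) : |y / l| ≤ 3 * j / l := by
      rw [abs_div, abs_of_pos hl]
      gcongr
    refine abs_logSecondDiff_sub_taylor_le (abs_div_le ?_) ?_ ?_ ?_
    · rw [abs_le]; constructor <;> linarith
    · rw [← add_div]
      exact abs_div_le (by rw [abs_le]; constructor <;> linarith)
    · rw [← sub_div]
      exact abs_div_le (by rw [abs_le]; constructor <;> linarith)
    · rw [div_le_div_iff₀ hl two_pos]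
      linarith
  calc _ ≤ ∑ i ∈ Finset.range (2 * j), 8 * (3 * j / l : ℝ) ^ 6 :=
        (Finset.abs_sum_le_sum_abs _ _).trans (Finset.sum_le_sum hterm)
    _ = 16 * j * (3 * j / l) ^ 6 := by
        rw [Finset.sum_const, Finset.card_range, nsmul_eq_mul]
        push_cast
        ring

theorem hFn_pos {l j : ℕ} (h : j < l) : 0 < hFn l j := by
  have hjl : (j : ℚ) < l := by exact_mod_cast h
  have hl : 0 < l := by lia
  exact div_pos (by positivity) (sub_pos.2 hjl)

theorem cast_hFn {l : ℕ} (hl : l ≠ 0) (j : ℕ) :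
    (hFn l j : ℝ) = (1 + (j / l : ℝ)) / (1 - (j / l : ℝ)) := by
  have hl' : (l : ℝ) ≠ 0 := Nat.cast_ne_zero.2 hl
  rw [one_add_div hl', one_sub_div hl', div_div_div_cancel_right₀ hl', hFn]
  push_cast
  rfl

theorem isBigO_log_one_add_div_one_sub_sub_taylor :
    (fun x : ℝ => Real.log ((1 + x) / (1 - x)) - (2 * x + 2 * x ^ 3 / 3))
      =O[𝓝 0] fun x => x ^ 5 := by
  refine IsBigO.of_bound 4 ?_
  filter_upwards [Metric.ball_mem_nhds (0 : ℝ) (half_pos one_pos)] with x hx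
  have hx : |x| < 1 / 2 := by simpa using hx
  have hsq : x ^ 2 ≤ 1 / 2 := by nlinarith [sq_abs x, abs_nonneg x]
  have taylor : |1 / 2 * Real.log ((1 + x) / (1 - x)) - (x + x ^ 3 / 3)|
      ≤ |x| ^ 5 / (1 - x ^ 2) := by
    have h := Real.sum_range_sub_log_div_le (hx.trans one_half_lt_one) 2
    norm_num [Finset.sum_range_succ] at h ⊢
    exact h
  calc |Real.log ((1 + x) / (1 - x)) - (2 * x + 2 * x ^ 3 / 3)|
      = |2 * (1 / 2 * Real.log ((1 + x) / (1 - x)) - (x + x ^ 3 / 3))| := by ring_nf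
    _ = 2 * |1 / 2 * Real.log ((1 + x) / (1 - x)) - (x + x ^ 3 / 3)| := by
        rw [abs_mul, abs_two]
    _ ≤ 2 * (|x| ^ 5 / (1 - x ^ 2)) := by
        gcongr
    _ ≤ 2 * (|x| ^ 5 / (1 / 2)) := by gcongr; linarith
    _ = 4 * ‖x ^ 5‖ := by rw [norm_pow, Real.norm_eq_abs]; ring

theorem isBigO_one_div_pow_of_eventuallyEq {f : ℕ → ℝ} {q : ℝ → ℝ} {n : ℕ}
    (hq : ContinuousAt q 0) (hf : ∀ᶠ a : ℕ in atTop, f a = q (1 / (a : ℝ)) * (1 / (a : ℝ) ^ n)) :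
    f =O[atTop] fun a : ℕ => 1 / (a : ℝ) ^ n := by
  have hbdd : (fun a : ℕ => q (1 / (a : ℝ))) =O[atTop] fun _ => (1 : ℝ) :=
    (hq.tendsto.comp tendsto_one_div_atTop_nhds_zero_nat).isBigO_one ℝ
  simpa only [one_mul] using
    (hbdd.mul (isBigO_refl (fun a : ℕ => 1 / (a : ℝ) ^ n) atTop)).congr' (.symm hf) .rfl

theorem isBigO_log_gFn_sub_logGFnTaylor :
    (fun a : ℕ => Real.log (gFn (4 * a ^ 2) (a + 1)) - logGFnTaylor (4 * a ^ 2) (a + 1))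
      =O[atTop] fun a : ℕ => 1 / (a : ℝ) ^ 5 := by
  have hbound : (fun a : ℕ => 16 * ((a + 1 : ℕ) : ℝ) * (3 * (a + 1 : ℕ) / (4 * a ^ 2 : ℕ)) ^ 6)
      =O[atTop] fun a : ℕ => 1 / (a : ℝ) ^ 5 := by
    refine isBigO_one_div_pow_of_eventuallyEq (q := fun t => 16 * (3 / 4) ^ 6 * (1 + t) ^ 7)
      (by fun_prop) ?_
    filter_upwards [eventually_ne_atTop 0] with a ha
    push_cast
    field_simp
  refine IsBigO.trans (IsBigO.of_bound' ?_) hbound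
  filter_upwards [eventually_ge_atTop 3] with a ha
  exact (abs_log_gFn_sub_logGFnTaylor_le (by nlinarith)).trans (le_abs_self _)

theorem isBigO_logGFnTaylor_sub_expansion :
    (fun a : ℕ => logGFnTaylor (4 * a ^ 2) (a + 1)
        - (1 / (2 * (a : ℝ)) + 3 / (2 * (a : ℝ) ^ 2) + 47 / (32 * (a : ℝ) ^ 3)
            + 19 / (32 * (a : ℝ) ^ 4)))
      =O[atTop] fun a : ℕ => 1 / (a : ℝ) ^ 5 := by
  -- With `t = 1 / a`, the terms of degree at least five of the main term are `t ^ 5 * q t`.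
  refine isBigO_one_div_pow_of_eventuallyEq
    (q := fun t => -(3 + t) / 8 + 3 / 32 * (10 + 10 * t + 5 * t ^ 2 + t ^ 3)
      + (1 + t) ^ 3 / 64 - 3 * (1 + t) ^ 5 / 64) (by fun_prop) ?_
  filter_upwards [eventually_ne_atTop 0] with a ha
  rw [logGFnTaylor, sum_logSecondDiffTaylor]
  push_cast
  field_simp
  ring

theorem isBigO_log_gFn_sub_expansion :
    (fun a : ℕ => Real.log (gFn (4 * a ^ 2) (a + 1))
        - (1 / (2 * (a : ℝ)) + 3 / (2 * (a : ℝ) ^ 2) + 47 / (32 * (a : ℝ) ^ 3)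
            + 19 / (32 * (a : ℝ) ^ 4)))
      =O[atTop] fun a : ℕ => 1 / (a : ℝ) ^ 5 :=
  isBigO_log_gFn_sub_logGFnTaylor.triangle isBigO_logGFnTaylor_sub_expansion

theorem isBigO_log_hFn_sub_taylor :
    (fun a : ℕ => Real.log (hFn (4 * a ^ 2) (a + 1))
        - (2 * (((a + 1 : ℕ) : ℝ) / (4 * a ^ 2 : ℕ))
          + 2 * (((a + 1 : ℕ) : ℝ) / (4 * a ^ 2 : ℕ)) ^ 3 / 3))
      =O[atTop] fun a : ℕ => 1 / (a : ℝ) ^ 5 := by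
  have hratio : (fun a : ℕ => ((a + 1 : ℕ) : ℝ) / (4 * a ^ 2 : ℕ))
      =O[atTop] fun a : ℕ => 1 / (a : ℝ) ^ 1 := by
    refine isBigO_one_div_pow_of_eventuallyEq (q := fun t => (1 + t) / 4) (by fun_prop) ?_
    filter_upwards [eventually_ne_atTop 0] with a ha
    push_cast
    field_simp
  simp only [pow_one] at hratio
  have hlog := isBigO_log_one_add_div_one_sub_sub_taylor.comp_tendsto
    (hratio.trans_tendsto tendsto_one_div_atTop_nhds_zero_nat)
  refine (hlog.trans (hratio.pow 5)).congr' ?_ (.of_eq (by simp only [div_pow, one_pow]))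
  filter_upwards [eventually_ne_atTop 0] with a ha
  rw [cast_hFn (by positivity)]
  rfl

theorem isBigO_log_hFn_sub_expansion :
    (fun a : ℕ => Real.log (hFn (4 * a ^ 2) (a + 1))
        - (1 / (2 * (a : ℝ)) + 1 / (2 * (a : ℝ) ^ 2) + 1 / (96 * (a : ℝ) ^ 3)
            + 1 / (32 * (a : ℝ) ^ 4)))
      =O[atTop] fun a : ℕ => 1 / (a : ℝ) ^ 5 := by
  refine isBigO_log_hFn_sub_taylor.triangle
    (isBigO_one_div_pow_of_eventuallyEq (q := fun t => (3 + t) / 96) (by fun_prop) ?_)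
  filter_upwards [eventually_ne_atTop 0] with a ha
  push_cast
  field_simp
  ring

theorem eventually_lt_of_isBigO_of_gap {α : Type*} {F : Filter α} {u v U V e gap : α → ℝ}
    (hu : (fun x => u x - U x) =O[F] e) (hv : (fun x => v x - V x) =O[F] e) (he : e =o[F] gap)
    (hpos : ∀ᶠ x in F, 0 < gap x) (hgap : ∀ᶠ x in F, V x + gap x ≤ U x) :
    ∀ᶠ x in F, v x < u x := by
  have hsmall := ((hu.sub hv).trans_isLittleO he).bound one_half_pos
  filter_upwards [hsmall, hpos, hgap] with x hsmall hpos hgap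
  rw [Real.norm_of_nonneg hpos.le] at hsmall
  linarith [(abs_le.1 hsmall).1]

theorem isLittleO_one_div_pow_of_lt {m n : ℕ} (h : m < n) :
    (fun a : ℕ => 1 / (a : ℝ) ^ n) =o[atTop] fun a : ℕ => 1 / (a : ℝ) ^ m := by
  have hpow : (fun a : ℕ => (a : ℝ) ^ m) =o[atTop] fun a : ℕ => (a : ℝ) ^ n :=
    (isLittleO_pow_pow_atTop_of_lt h).comp_tendsto tendsto_natCast_atTop_atTop
  simp only [one_div]
  refine hpow.inv_rev ?_
  filter_upwards [eventually_ne_atTop 0] with a ha h0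
  exact absurd h0 (by positivity)

theorem eventually_log_hFn_lt_log_gFn :
    ∀ᶠ a : ℕ in atTop,
      Real.log (hFn (4 * a ^ 2) (a + 1)) < Real.log (gFn (4 * a ^ 2) (a + 1)) := by
  refine eventually_lt_of_isBigO_of_gap isBigO_log_gFn_sub_expansion isBigO_log_hFn_sub_expansion
    (isLittleO_one_div_pow_of_lt (m := 2) (by norm_num)) ?_ ?_
  · filter_upwards [eventually_ne_atTop 0] with a ha
    positivity
  · filter_upwards [eventually_ne_atTop 0] with a ha
    rw [← sub_nonneg]
    calc (0 : ℝ) ≤ 35 / (24 * a ^ 3) + 9 / (16 * a ^ 4) := by positivity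
      _ = _ := by field_simp; ring

/-- Along positive integers `a → ∞`, with `l = 4a²`:
`log g_{4a²}(a+1) = 1/(2a) + 3/(2a²) + 47/(32a³) + 19/(32a⁴) + O(a⁻⁵)` and
`log h_{4a²}(a+1) = 1/(2a) + 1/(2a²) + 1/(96a³) + 1/(32a⁴) + O(a⁻⁵)`;
in particular `g_{4a²}(a+1) > h_{4a²}(a+1)` for all sufficiently large `a`. -/
theorem stmt11 :
    (fun a : ℕ => Real.log ((gFn (4 * a ^ 2) (a + 1) : ℚ) : ℝ)
        - (1 / (2 * (a : ℝ)) + 3 / (2 * (a : ℝ) ^ 2) + 47 / (32 * (a : ℝ) ^ 3)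
            + 19 / (32 * (a : ℝ) ^ 4)))
      =O[atTop] (fun a : ℕ => 1 / (a : ℝ) ^ 5) ∧
    (fun a : ℕ => Real.log ((hFn (4 * a ^ 2) (a + 1) : ℚ) : ℝ)
        - (1 / (2 * (a : ℝ)) + 1 / (2 * (a : ℝ) ^ 2) + 1 / (96 * (a : ℝ) ^ 3)
            + 1 / (32 * (a : ℝ) ^ 4)))
      =O[atTop] (fun a : ℕ => 1 / (a : ℝ) ^ 5) ∧
    (∀ᶠ a : ℕ in atTop, hFn (4 * a ^ 2) (a + 1) < gFn (4 * a ^ 2) (a + 1)) := by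
  refine ⟨isBigO_log_gFn_sub_expansion, isBigO_log_hFn_sub_expansion, ?_⟩
  filter_upwards [eventually_log_hFn_lt_log_gFn, eventually_ge_atTop 2] with a hlog ha
  have hh : 0 < hFn (4 * a ^ 2) (a + 1) := hFn_pos (by nlinarith)
  have hg : 0 < gFn (4 * a ^ 2) (a + 1) := gFn_pos (by nlinarith)
  exact_mod_cast (Real.log_lt_log_iff (by exact_mod_cast hh) (by exact_mod_cast hg)).1 hlog
end

section
/- For every integer l ≥ 9, setting a_l = ⌊√l / 2⌋, the pairwise inequalities d_l(a_l + 1 + j) · Q_l(a_l + 1 + j) > −d_l(j) · Q_l(j) hold for every integer j with 1 ≤ j ≤ a_l (all indices involved lie in {1, …, τ} since 2a_l + 1 ≤ τ for l ≥ 9). -/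
/-- `C_l(j) = (j(l−j)/(l+j)²) · binom(2(l+j)−1, l+j−1) · binom(4l−1−2(l+j), l+j−1)`. -/
def cFn (l j : ℕ) : ℚ :=
  ((j : ℚ) * ((l : ℚ) - j) / ((l : ℚ) + j) ^ 2) *
    (Nat.choose (2 * (l + j) - 1) (l + j - 1) : ℚ) *
    (Nat.choose (4 * l - 1 - 2 * (l + j)) (l + j - 1) : ℚ)

/-- The probability function `Q_l(j) = C_l(j) / Σ_{i=1}^{τ} C_l(i)`, with `τ = ⌊l/3⌋`. -/
def qFn (l j : ℕ) : ℚ := cFn l j / ∑ i ∈ Finset.Icc 1 (l / 3), cFn l i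

/-!
Put `a = ⌊√l / 2⌋`, so that `4a² ≤ l < 4(a+1)²`, and compare `j ≤ a` with `b = j + a + 1`.

The reciprocal of `g_l(k)` is the product of `1 - 4k² / (l+k-i)²` over `i < 2k`. Multiplying the
factors in pairs symmetric about `l + 1/2` and using AM-GM and Bernoulli gives
`d_l(k) ≥ -2k δ(k)` with `δ(k) = 1 / (l-k) - 16k² / (2l+1)²`, which is roughly `(l - 4k²) / l²`: the
bound may be negative at `j` but is positive at `b`.

Up to the factor `k / (4(l+k))`, the weight `C_l(k)` is a product `w(k)` of two binomial
coefficients. The four factors of the ratio `w(k) / w(k+1)` are estimated by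
`log (u/v) ≤ (u-v)(u+v) / (2uv)`, whence the Gaussian bound `w(j) ≤ exp Θ * w(b)` with
`Θ = 4(b² - j²) / (l-2b-1)`.

It remains to see that `j² (l+b) (l δ(j)) exp Θ < b² (l+j) (-l δ(b))`. For `l ≥ 484` the tangent
inequality `x ≤ exp (x-1)` at `x = (48/25) l δ(j)` bounds `l δ(j) exp Θ` by
`(25/48) e³ < 10.47`, and a polynomial inequality in `j / (a+1)` is left. The finitely many pairs
with `l < 484` are decided by evaluating the same lower bound for `g_l` exactly, except for
`l = 9`, `j = 1`, where that bound is too weak and `g_l` itself is used.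
-/

/-- The binomial part of `C_l(k)`, normalised so that `C_l(k) = k / (4 (l + k)) * binomWeight l k`
and that consecutive values have a simple ratio. -/
def binomWeight (l k : ℕ) : ℕ := (l + k).centralBinom * (2 * (l - k)).choose (l + k)

/-- The numerator of `binomWeight l (j + n) / binomWeight l j`. -/
def ratioNum (l j n : ℕ) : ℕ :=
  (2 * (l + j + n)).descFactorial (2 * n) * (l - 3 * j).descFactorial (3 * n)

/-- The denominator of `binomWeight l (j + n) / binomWeight l j`. -/
def ratioDen (l j n : ℕ) : ℕ :=
  (l + j + n).descFactorial n ^ 3 * (2 * (l - j)).descFactorial (2 * n)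

section Weight

variable {l j k n : ℕ}

lemma binomWeight_pos (h : 3 * k ≤ l) : 0 < binomWeight l k :=
  Nat.mul_pos (Nat.centralBinom_pos _) (Nat.choose_pos (by lia))

lemma cFn_eq_mul_binomWeight (hk : 1 ≤ k) (h : 3 * k ≤ l) :
    cFn l k = k / (4 * (l + k)) * binomWeight l k := by
  obtain ⟨p, hp⟩ : ∃ p, l + k = p + 1 := ⟨l + k - 1, by lia⟩
  obtain ⟨q, hq⟩ : ∃ q, 2 * (l - k) = q + 1 := ⟨2 * (l - k) - 1, by lia⟩
  have hfirst : 2 * (2 * p + 1).choose p = (p + 1).centralBinom := by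
    rw [Nat.centralBinom, mul_add_one, Nat.choose_succ_succ, ← Nat.choose_symm_half, two_mul]
  have hsecond : (q + 1) * q.choose p = (q + 1).choose (p + 1) * (p + 1) :=
    Nat.add_one_mul_choose_eq q p
  have hpQ : (l : ℚ) + k = p + 1 := by exact_mod_cast hp
  have hqQ : (2 : ℚ) * (l - k) = q + 1 := by
    rw [← Nat.cast_sub (by lia)]
    exact_mod_cast hq
  have hM : (l : ℚ) - k = (q + 1) / 2 := by linarith
  qify at hfirst hsecond
  rw [cFn, binomWeight, hq, show 4 * l - 1 - 2 * (l + k) = q by lia, hp,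
    show 2 * (p + 1) - 1 = 2 * p + 1 by lia, Nat.add_sub_cancel, hpQ, hM, Nat.cast_mul, ← hfirst]
  field_simp
  linear_combination (4 * (2 * p + 1).choose p : ℚ) * hsecond

lemma cFn_pos (hk : 1 ≤ k) (h : 3 * k ≤ l) : 0 < cFn l k := by
  have := binomWeight_pos h
  rw [cFn_eq_mul_binomWeight hk h]
  positivity

lemma ratioDen_pos (h : 3 * (j + n) ≤ l) : 0 < ratioDen l j n :=
  Nat.mul_pos (pow_pos (Nat.descFactorial_pos.2 (by lia)) 3) (Nat.descFactorial_pos.2 (by lia))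

open Nat in
lemma binomWeight_mul_factorial (h : 3 * k ≤ l) :
    binomWeight l k * ((l + k)! ^ 3 * (l - 3 * k)!) = (2 * (l + k))! * (2 * (l - k))! := by
  have hcentral := choose_mul_factorial_mul_factorial (show l + k ≤ 2 * (l + k) by lia)
  have hchoose := choose_mul_factorial_mul_factorial (show l + k ≤ 2 * (l - k) by lia)
  rw [show 2 * (l + k) - (l + k) = l + k by lia, ← centralBinom] at hcentral
  rw [show 2 * (l - k) - (l + k) = l - 3 * k by lia] at hchoose
  rw [binomWeight, ← hcentral, ← hchoose]
  ring

open Nat in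
lemma binomWeight_add_mul_ratioDen (h : 3 * (j + n) ≤ l) :
    binomWeight l (j + n) * ratioDen l j n = binomWeight l j * ratioNum l j n := by
  have hj := binomWeight_mul_factorial (l := l) (k := j) (by lia)
  have hb := binomWeight_mul_factorial h
  have h₁ := factorial_mul_descFactorial (show n ≤ l + j + n by lia)
  have h₂ := factorial_mul_descFactorial (show 2 * n ≤ 2 * (l - j) by lia)
  have h₃ := factorial_mul_descFactorial (show 2 * n ≤ 2 * (l + j + n) by lia)
  have h₄ := factorial_mul_descFactorial (show 3 * n ≤ l - 3 * j by lia)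
  rw [show l + j + n - n = l + j by lia] at h₁
  rw [show 2 * (l - j) - 2 * n = 2 * (l - (j + n)) by lia] at h₂
  rw [show 2 * (l + j + n) - 2 * n = 2 * (l + j) by lia] at h₃
  rw [show l - 3 * j - 3 * n = l - 3 * (j + n) by lia] at h₄
  rw [← add_assoc, ← h₁, ← h₃] at hb
  rw [← h₂, ← h₄] at hj
  rw [ratioDen, ratioNum]
  refine Nat.eq_of_mul_eq_mul_right (show 0 < (l + j)! ^ 3 * (l - 3 * (j + n))! *
    (2 * (l - (j + n)))! by positivity) ?_
  linear_combination (2 * (l - j)).descFactorial (2 * n) * (2 * (l - (j + n)))! * hb -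
    (2 * (l + j + n)).descFactorial (2 * n) * (2 * (l - (j + n)))! * hj

end Weight

section Gap

variable {l k : ℕ}

lemma prod_range_le_pow_of_mul_reflect_le {R : Type*} [CommRing R] [LinearOrder R]
    [IsStrictOrderedRing R] {f : ℕ → R} {r : R} {n : ℕ} (hf : ∀ i < n, 0 ≤ f i) (hr : 0 ≤ r)
    (h : ∀ i < n, f i * f (n - 1 - i) ≤ r ^ 2) : ∏ i ∈ Finset.range n, f i ≤ r ^ n := by
  refine le_of_sq_le_sq ?_ (pow_nonneg hr n)
  calc (∏ i ∈ Finset.range n, f i) ^ 2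
      = ∏ i ∈ Finset.range n, f i * f (n - 1 - i) := by
        rw [Finset.prod_mul_distrib, Finset.prod_range_reflect, sq]
    _ ≤ ∏ _i ∈ Finset.range n, r ^ 2 := by
        refine Finset.prod_le_prod (fun i hi ↦ ?_) fun i hi ↦ h i (Finset.mem_range.1 hi)
        have hi := Finset.mem_range.1 hi
        exact mul_nonneg (hf i hi) (hf _ (by lia))
    _ = (r ^ n) ^ 2 := by
        rw [Finset.prod_const, Finset.card_range, pow_right_comm]

lemma gFn_mul_prod (h : 3 * k ≤ l) :
    gFn l k * ∏ i ∈ Finset.range (2 * k), (1 - 4 * k ^ 2 / ((l : ℚ) + k - i) ^ 2) = 1 := by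
  have hden : (0 : ℚ) < (l + 3 * k).descFactorial (2 * k) * (l - k).descFactorial (2 * k) :=
    mul_pos (mod_cast Nat.descFactorial_pos.2 (by lia)) (mod_cast Nat.descFactorial_pos.2 (by lia))
  rw [gFn, div_mul_eq_mul_div, div_eq_one_iff_eq hden.ne']
  simp only [Nat.descFactorial_eq_prod_range, Nat.cast_prod, ← Finset.prod_pow,
    ← Finset.prod_mul_distrib]
  refine Finset.prod_congr rfl fun i hi ↦ ?_
  have hi : i < 2 * k := Finset.mem_range.1 hi
  have hm : (l : ℚ) + k - i ≠ 0 := by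
    rw [sub_ne_zero]
    exact_mod_cast (show l + k ≠ i by lia)
  rw [Nat.cast_sub (by lia), Nat.cast_sub (by lia), Nat.cast_sub (by lia), Nat.cast_sub (by lia)]
  push_cast
  field_simp
  ring

lemma one_sub_sq_div_mul_le {F : Type*} [Field F] [LinearOrder F] [IsStrictOrderedRing F]
    {x y t : F} (hx : 0 < x) (hy : 0 < y) (hxy : t ^ 2 ≤ x * y) :
    (1 - t ^ 2 / x ^ 2) * (1 - t ^ 2 / y ^ 2) ≤ (1 - 4 * t ^ 2 / (x + y) ^ 2) ^ 2 := by
  have hamgm : 4 * t ^ 2 / (x + y) ^ 2 ≤ t ^ 2 / (x * y) := by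
    rw [div_le_div_iff₀ (by positivity) (by positivity)]
    nlinarith [sq_nonneg (x - y), sq_nonneg t]
  have hle : t ^ 2 / (x * y) ≤ 1 := (div_le_one (by positivity)).2 hxy
  calc (1 - t ^ 2 / x ^ 2) * (1 - t ^ 2 / y ^ 2)
      = (1 - t ^ 2 / (x * y)) ^ 2 - (t / x - t / y) ^ 2 := by field_simp; ring
    _ ≤ (1 - t ^ 2 / (x * y)) ^ 2 := sub_le_self _ (sq_nonneg _)
    _ ≤ (1 - 4 * t ^ 2 / (x + y) ^ 2) ^ 2 := by gcongr

lemma one_le_gFn_mul_pow (h : 3 * k ≤ l) :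
    1 ≤ gFn l k * (1 - 16 * k ^ 2 / (2 * (l : ℚ) + 1) ^ 2) ^ (2 * k) := by
  have hl : 3 * (k : ℚ) ≤ l := by exact_mod_cast h
  have hg : 0 ≤ gFn l k := by unfold gFn; positivity
  refine (gFn_mul_prod h).ge.trans
    (mul_le_mul_of_nonneg_left (prod_range_le_pow_of_mul_reflect_le ?_ ?_ ?_) hg)
  · intro i hi
    have hi : (i : ℚ) + 1 ≤ 2 * k := by exact_mod_cast hi
    rw [sub_nonneg, div_le_one (by nlinarith)]
    nlinarith
  · rw [sub_nonneg, div_le_one (by positivity)]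
    nlinarith
  · intro i hi
    have hcast : ((2 * k - 1 - i : ℕ) : ℚ) = 2 * k - 1 - i := by
      rw [Nat.cast_sub (by lia), Nat.cast_sub (by lia)]
      push_cast
      ring
    have hpair := one_sub_sq_div_mul_le (x := (l : ℚ) + k - i) (y := l - k + 1 + i) (t := 2 * k)
      (by linarith) (by linarith) (by nlinarith)
    rw [show (l : ℚ) + k - i + (l - k + 1 + i) = 2 * l + 1 by ring,
      show 4 * (2 * (k : ℚ)) ^ 2 = 16 * k ^ 2 by ring,
      show (2 * (k : ℚ)) ^ 2 = 4 * k ^ 2 by ring] at hpair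
    rwa [hcast, show (l : ℚ) + k - (2 * k - 1 - i) = l - k + 1 + i by ring]

/-- The amount by which `1 / (l - k)` exceeds the first-order gain of `gFn l k`, so that
`dFn l k` is at least `-2 k * defect l k`. -/
def defect (l k : ℕ) : ℚ := 1 / (l - k) - 16 * k ^ 2 / (2 * l + 1) ^ 2

lemma neg_mul_defect_le_dFn (hk : 1 ≤ k) (h : 3 * k ≤ l) :
    -(2 * k * defect l k) ≤ dFn l k := by
  have hl : 3 * (k : ℚ) ≤ l := by exact_mod_cast h
  have hk₀ : (1 : ℚ) ≤ k := by exact_mod_cast hk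
  have hg : 0 ≤ gFn l k := by unfold gFn; positivity
  set x : ℚ := 16 * k ^ 2 / (2 * l + 1) ^ 2 with hx
  have hx₀ : 0 ≤ x := by positivity
  have hx₁ : x ≤ 1 := by
    rw [hx, div_le_one (by positivity)]
    nlinarith
  have hgain : 1 + 2 * k * x ≤ gFn l k := by
    calc 1 + 2 * k * x = 1 + (2 * k : ℕ) * x := by push_cast; ring
      _ ≤ (1 + x) ^ (2 * k) := one_add_mul_le_pow (by linarith) _
      _ ≤ (1 + x) ^ (2 * k) * (gFn l k * (1 - x) ^ (2 * k)) :=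
        le_mul_of_one_le_right (by positivity) (one_le_gFn_mul_pow h)
      _ = gFn l k * (1 - x ^ 2) ^ (2 * k) := by
        rw [mul_left_comm, ← mul_pow]
        ring
      _ ≤ gFn l k := mul_le_of_le_one_right hg (pow_le_one₀ (by nlinarith) (by nlinarith))
  have hh : hFn l k = 1 + 2 * k * (1 / (l - k)) := by
    have : (l : ℚ) - k ≠ 0 := by linarith
    rw [hFn]
    field_simp
    ring
  rw [dFn, hh, defect, ← hx]
  linarith

lemma neg_defect_mul_binomWeight_le_dFn_mul_cFn (hk : 1 ≤ k) (h : 3 * k ≤ l) :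
    -(k ^ 2 / (2 * (l + k)) * (defect l k * binomWeight l k)) ≤ dFn l k * cFn l k :=
  calc -(k ^ 2 / (2 * (l + k)) * (defect l k * binomWeight l k))
      = -(2 * k * defect l k) * cFn l k := by
        rw [cFn_eq_mul_binomWeight hk h]
        field_simp
        ring
    _ ≤ dFn l k * cFn l k :=
        mul_le_mul_of_nonneg_right (neg_mul_defect_le_dFn hk h) (cFn_pos hk h).le

end Gap

section FiniteCheck

/-- The numerator of the lower bound `gapNum l k / gapDen l k` for `dFn l k` that replaces
`gFn l k` by `((2l+1)² / ((2l+1)² - 16k²)) ^ (2k)`. -/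
def gapNum (l k : ℕ) : ℤ :=
  ((l - k) * (2 * l + 1) ^ (4 * k) : ℕ) - ((l + k) * ((2 * l + 1) ^ 2 - 16 * k ^ 2) ^ (2 * k) : ℕ)

/-- The denominator of the lower bound `gapNum l k / gapDen l k` for `dFn l k`. -/
def gapDen (l k : ℕ) : ℕ := (l - k) * ((2 * l + 1) ^ 2 - 16 * k ^ 2) ^ (2 * k)

/-- An integer whose positivity implies that of `d_l(j+n) C_l(j+n) + d_l(j) C_l(j)`; it is cheap
enough to be evaluated by the kernel. -/
def pairGap (l j n : ℕ) : ℤ :=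
  gapNum l (j + n) * ((j + n) * (l + j) * gapDen l j * ratioNum l j n : ℕ) +
    gapNum l j * (j * (l + (j + n)) * gapDen l (j + n) * ratioDen l j n : ℕ)

variable {l j k n : ℕ}

lemma gapDen_pos (hk : 1 ≤ k) (h : 3 * k ≤ l) : 0 < gapDen l k :=
  Nat.mul_pos (by lia) (pow_pos (Nat.sub_pos_of_lt (by nlinarith)) _)

lemma gapNum_div_gapDen_le_dFn (hk : 1 ≤ k) (h : 3 * k ≤ l) :
    (gapNum l k : ℚ) / gapDen l k ≤ dFn l k := by
  have hsub : 16 * k ^ 2 < (2 * l + 1) ^ 2 := by nlinarith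
  have hY : (0 : ℚ) < (2 * l + 1) ^ 2 - 16 * k ^ 2 := by
    rw [sub_pos]
    exact_mod_cast hsub
  have hM : (0 : ℚ) < l - k := by
    rw [sub_pos]
    exact_mod_cast (show k < l by lia)
  have hg : (2 * (l : ℚ) + 1) ^ (4 * k) / ((2 * l + 1) ^ 2 - 16 * k ^ 2) ^ (2 * k) ≤ gFn l k := by
    have := one_le_gFn_mul_pow h
    rw [one_sub_div (by positivity), div_pow, ← pow_mul, mul_div_assoc',
      one_le_div (by positivity), ← mul_assoc] at this
    rwa [div_le_iff₀ (by positivity)]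
  calc (gapNum l k : ℚ) / gapDen l k
      = (2 * (l : ℚ) + 1) ^ (4 * k) / ((2 * l + 1) ^ 2 - 16 * k ^ 2) ^ (2 * k)
          - (l + k) / (l - k) := by
        rw [gapNum, gapDen]
        push_cast [Nat.cast_sub hsub.le, Nat.cast_sub (show k ≤ l by lia)]
        rw [sub_div, mul_div_mul_left _ _ hM.ne', mul_div_mul_right _ _ (pow_pos hY _).ne']
    _ ≤ dFn l k := sub_le_sub_right hg _

lemma dFn_mul_cFn_add_pos_of_pairGap_pos (hj : 1 ≤ j) (h : 3 * (j + n) ≤ l)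
    (hgap : 0 < pairGap l j n) :
    0 < dFn l (j + n) * cFn l (j + n) + dFn l j * cFn l j := by
  have hDj : (0 : ℚ) < gapDen l j := mod_cast gapDen_pos hj (by lia)
  have hDb : (0 : ℚ) < gapDen l (j + n) := mod_cast gapDen_pos (by lia) h
  have hR : (0 : ℚ) < ratioDen l j n := mod_cast ratioDen_pos h
  have hwj : (0 : ℚ) < binomWeight l j := mod_cast binomWeight_pos (by lia)
  have hw : (binomWeight l (j + n) : ℚ) * ratioDen l j n = binomWeight l j * ratioNum l j n :=
    mod_cast binomWeight_add_mul_ratioDen h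
  calc (0 : ℚ) < binomWeight l j * pairGap l j n / (4 * (l + j) * (l + (j + n)) * gapDen l j *
          gapDen l (j + n) * ratioDen l j n) := by positivity
    _ = gapNum l (j + n) / gapDen l (j + n) * cFn l (j + n) +
          gapNum l j / gapDen l j * cFn l j := by
        rw [cFn_eq_mul_binomWeight hj (by lia), cFn_eq_mul_binomWeight (by lia) h,
          eq_div_of_mul_eq hR.ne' hw, pairGap]
        push_cast
        field_simp
    _ ≤ _ := by
        gcongr
        · exact (cFn_pos (by lia) h).le
        · exact gapNum_div_gapDen_le_dFn (by lia) h
        · exact (cFn_pos hj (by lia)).le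
        · exact gapNum_div_gapDen_le_dFn hj (by lia)

lemma pairGap_pos_of_lt_eleven : ∀ a < 11, ∀ r < 8 * a + 4, 10 ≤ 4 * a ^ 2 + r → ∀ i < a,
    0 < pairGap (4 * a ^ 2 + r) (i + 1) (a + 1) := by
  decide +kernel

lemma dFn_mul_cFn_add_pos_nine : 0 < dFn 9 3 * cFn 9 3 + dFn 9 1 * cFn 9 1 := by
  norm_num [dFn, gFn, hFn, cFn, Nat.choose, Nat.descFactorial]

lemma dFn_mul_cFn_add_pos_of_lt_eleven {a : ℕ} (ha : a < 11) (hl : 9 ≤ l) (hal : 4 * a ^ 2 ≤ l)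
    (hla : l < 4 * (a + 1) ^ 2) (hj : 1 ≤ j) (hja : j ≤ a) (h : 3 * (j + (a + 1)) ≤ l) :
    0 < dFn l (j + (a + 1)) * cFn l (j + (a + 1)) + dFn l j * cFn l j := by
  obtain rfl | hl := hl.eq_or_lt
  · obtain rfl : a = 1 := by nlinarith
    obtain rfl : j = 1 := by lia
    exact dFn_mul_cFn_add_pos_nine
  · obtain ⟨r, rfl⟩ := Nat.exists_eq_add_of_le hal
    obtain ⟨i, rfl⟩ := Nat.exists_eq_add_of_le' hj
    exact dFn_mul_cFn_add_pos_of_pairGap_pos hj h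
      (pairGap_pos_of_lt_eleven a ha r (by lia) hl i hja)

end FiniteCheck

section Decay

open Real

lemma le_mul_exp_of_le_harmonicMean {u v m : ℝ} (hv : 0 < v) (huv : v ≤ u) (hm : 0 < m)
    (h : m * (u + v) ≤ 2 * u * v) : u ≤ v * exp ((u - v) / m) := by
  have hu : 0 < u := hv.trans_le huv
  have hlog : log (u / v) ≤ (u - v) / m :=
    calc log (u / v) ≤ sinh (log (u / v)) :=
          self_le_sinh_iff.2 (log_nonneg ((one_le_div hv).2 huv))
      _ = (u - v) * (u + v) / (2 * u * v) := by
          rw [sinh_log (div_pos hu hv)]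
          field_simp
          ring
      _ ≤ (u - v) / m := by
          rw [div_le_div_iff₀ (by positivity) hm, mul_assoc, mul_comm (u + v)]
          exact mul_le_mul_of_nonneg_left h (sub_nonneg.2 huv)
  rwa [← div_le_iff₀' hv, ← log_le_iff_le_exp (div_pos hu hv)]

lemma mul_le_exp_mul_of_sq_le {x y m : ℝ} (hx : 484 ≤ x) (hy : 0 ≤ y) (hyx : y ^ 2 ≤ x)
    (hm₀ : 0 < m) (hm : m ≤ x - 2 * y - 3) :
    (x + y + 1) * (x + y + 1) * (x - y) * (x - y - 1 / 2) ≤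
      exp ((8 * y + 4) / m) *
        ((x + y + 1 / 2) * (x - 3 * y) * (x - 3 * y - 1) * (x - 3 * y - 2)) := by
  have h22 : 22 * y ≤ x := by nlinarith [sq_nonneg (y - 22)]
  have h₁ : x + y + 1 ≤ (x + y + 1 / 2) * exp ((x + y + 1 - (x + y + 1 / 2)) / m) :=
    le_mul_exp_of_le_harmonicMean (by linarith) (by linarith) hm₀ (by nlinarith)
  have h₂ : x + y + 1 ≤ (x - 3 * y) * exp ((x + y + 1 - (x - 3 * y)) / m) :=
    le_mul_exp_of_le_harmonicMean (by linarith) (by linarith) hm₀ (by nlinarith)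
  have h₃ : x - y ≤ (x - 3 * y - 1) * exp ((x - y - (x - 3 * y - 1)) / m) :=
    le_mul_exp_of_le_harmonicMean (by linarith) (by linarith) hm₀ (by nlinarith)
  have h₄ : x - y - 1 / 2 ≤ (x - 3 * y - 2) * exp ((x - y - 1 / 2 - (x - 3 * y - 2)) / m) :=
    le_mul_exp_of_le_harmonicMean (by linarith) (by linarith) hm₀ (by nlinarith)
  have h3y : 0 ≤ x - 3 * y := by linarith
  have h3y₁ : 0 ≤ x - 3 * y - 1 := by linarith
  have hxy : 0 ≤ x - y := by linarith
  have hxy₁ : 0 ≤ x - y - 1 / 2 := by linarith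
  have hexp : exp ((8 * y + 4) / m) = exp ((x + y + 1 - (x + y + 1 / 2)) / m) *
      exp ((x + y + 1 - (x - 3 * y)) / m) * exp ((x - y - (x - 3 * y - 1)) / m) *
      exp ((x - y - 1 / 2 - (x - 3 * y - 2)) / m) := by
    simp only [← exp_add, ← add_div]
    ring_nf
  rw [hexp]
  refine (mul_le_mul (mul_le_mul (mul_le_mul h₁ h₂ ?_ ?_) h₃ hxy ?_) h₄ hxy₁ ?_).trans_eq ?_
  iterate 4 positivity
  ring

variable {l j k c : ℕ} {m : ℝ}

lemma cast_ratioDen_one (hk : k < l) : (ratioDen l k 1 : ℝ) =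
    4 * (l + k + 1) * ((l + k + 1) * (l + k + 1) * (l - k) * (l - k - 1 / 2)) := by
  simp only [ratioDen, mul_one, Nat.descFactorial_succ, Nat.descFactorial_zero, Nat.sub_zero]
  push_cast [Nat.cast_sub hk.le, Nat.cast_sub (show 1 ≤ 2 * (l - k) by lia)]
  ring

lemma cast_ratioNum_one (hk : 3 * (k + 1) ≤ l) : (ratioNum l k 1 : ℝ) =
    4 * (l + k + 1) * ((l + k + 1 / 2) * (l - 3 * k) * (l - 3 * k - 1) * (l - 3 * k - 2)) := by
  simp only [ratioNum, mul_one, Nat.descFactorial_succ, Nat.descFactorial_zero, Nat.sub_zero]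
  push_cast [Nat.cast_sub (show 3 * k ≤ l by lia), Nat.cast_sub (show 1 ≤ l - 3 * k by lia),
    Nat.cast_sub (show 2 ≤ l - 3 * k by lia), Nat.cast_sub (show 1 ≤ 2 * (l + k + 1) by lia)]
  ring

lemma ratioDen_one_le_exp_mul_ratioNum_one (hl : 484 ≤ l) (hk : k ^ 2 ≤ l) (hm₀ : 0 < m)
    (hm : m ≤ l - 2 * k - 3) : (ratioDen l k 1 : ℝ) ≤ exp ((8 * k + 4) / m) * ratioNum l k 1 := by
  have h3k : 3 * (k + 1) ≤ l := by nlinarith [sq_nonneg ((k : ℤ) - 22)]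
  rw [cast_ratioDen_one (by lia), cast_ratioNum_one h3k, mul_left_comm (exp _)]
  exact mul_le_mul_of_nonneg_left (mul_le_exp_mul_of_sq_le (mod_cast hl) k.cast_nonneg
    (mod_cast hk) hm₀ hm) (by positivity)

lemma binomWeight_le_exp_mul_succ (hl : 484 ≤ l) (hk : k ^ 2 ≤ l) (hm₀ : 0 < m)
    (hm : m ≤ l - 2 * k - 3) :
    (binomWeight l k : ℝ) ≤ exp ((8 * k + 4) / m) * binomWeight l (k + 1) := by
  have h3k : 3 * (k + 1) ≤ l := by nlinarith [sq_nonneg ((k : ℤ) - 22)]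
  have hD : (0 : ℝ) < ratioDen l k 1 := mod_cast ratioDen_pos h3k
  have hstep : (binomWeight l (k + 1) : ℝ) * ratioDen l k 1 = binomWeight l k * ratioNum l k 1 :=
    mod_cast binomWeight_add_mul_ratioDen h3k
  refine le_of_mul_le_mul_right ?_ hD
  rw [mul_assoc, hstep, mul_left_comm]
  gcongr
  exact ratioDen_one_le_exp_mul_ratioNum_one hl hk hm₀ hm

lemma binomWeight_le_exp_mul (hl : 484 ≤ l) (hc : c ^ 2 ≤ l) (hm₀ : 0 < m)
    (hm : m ≤ l - 2 * c - 3) (hjk : j ≤ k) (hkc : k ≤ c + 1) :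
    (binomWeight l j : ℝ) ≤ exp (4 * (k ^ 2 - j ^ 2) / m) * binomWeight l k := by
  induction k, hjk using Nat.le_induction with
  | base => simp
  | succ k _ ih =>
    have hkc : k ≤ c := by lia
    have hkcR : (k : ℝ) ≤ c := mod_cast hkc
    calc (binomWeight l j : ℝ) ≤ exp (4 * (k ^ 2 - j ^ 2) / m) * binomWeight l k := ih (by lia)
      _ ≤ exp (4 * (k ^ 2 - j ^ 2) / m) *
          (exp ((8 * k + 4) / m) * binomWeight l (k + 1)) := by
        gcongr
        exact binomWeight_le_exp_mul_succ hl ((Nat.pow_le_pow_left hkc 2).trans hc) hm₀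
          (by linarith)
      _ = _ := by
        rw [← mul_assoc, ← exp_add]
        push_cast
        ring_nf

end Decay

section Tail

open Real

lemma sq_mul_lt_of_le_one_twelfth {y ε : ℝ} (hε : 0 < ε) (hε₁ : ε ≤ 1 / 12) (hεy : ε ≤ y)
    (hy : y ≤ 1) :
    1047 / 100 * y ^ 2 < (1 + y) ^ 2 * (1 - 36 / 121 * ε) *
      ((1 + y) ^ 2 * (1 - 36 / 121 * ε ^ 2) - (1 + 36 / 115 * (1 + y) * ε)) := by
  obtain hy₁ | hy₁ := le_total y (1 / 12)
  · have hgain : 31 / 20 * y ≤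
        (1 + y) ^ 2 * (1 - 36 / 121 * ε ^ 2) - (1 + 36 / 115 * (1 + y) * ε) := by
      have hε₂ : (1 + y) ^ 2 * ε ^ 2 ≤ (13 / 12) ^ 2 * (1 / 12 * y) := by gcongr <;> nlinarith
      nlinarith
    have hfactor : 118 / 121 ≤ (1 + y) ^ 2 * (1 - 36 / 121 * ε) := by nlinarith
    nlinarith [mul_le_mul hfactor hgain (by nlinarith) (by nlinarith)]
  · have hgain : 483 / 484 * (1 + y) ^ 2 - (1 + 3 / 115 * (1 + y)) ≤
        (1 + y) ^ 2 * (1 - 36 / 121 * ε ^ 2) - (1 + 36 / 115 * (1 + y) * ε) := by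
      have hε₂ : ε ^ 2 ≤ (1 / 12) ^ 2 := by gcongr
      nlinarith [mul_le_mul_of_nonneg_left hε₂ (sq_nonneg (1 + y))]
    have hfactor : 118 / 121 * (1 + y) ^ 2 ≤ (1 + y) ^ 2 * (1 - 36 / 121 * ε) := by nlinarith
    have hgain₀ : 0 ≤ 483 / 484 * (1 + y) ^ 2 - (1 + 3 / 115 * (1 + y)) := by nlinarith
    refine lt_of_lt_of_le ?_ (mul_le_mul hfactor hgain hgain₀ (by nlinarith))
    -- The two sides nearly touch at `y ≈ 0.594`.
    nlinarith [sq_nonneg (y - 594 / 1000), sq_nonneg ((y - 594 / 1000) * (y + 1)),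
      mul_nonneg (sub_nonneg.2 hy₁) (sq_nonneg (y - 594 / 1000))]

lemma div_sub_sq_le {y : ℝ} (hy : y ≤ 1) :
    (576 + 1056 * y) / (459 - 22 * y) - 48 / 25 * (483 / 484) * y ^ 2 ≤
      4 - 48 / 25 * (44 / 43) := by
  rw [sub_le_iff_le_add, div_le_iff₀ (by linarith)]
  -- The two sides nearly touch at `y ≈ 0.657`.
  nlinarith [mul_nonneg (sub_nonneg.2 hy) (sq_nonneg (y - 657 / 1000)), sq_nonneg (y - 657 / 1000)]

lemma four_div_mul_one_sub_le {x : ℝ} (hx : 0 < x) :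
    4 / x * (1 - 1 / x) ≤ 16 * x / (2 * x + 1) ^ 2 := by
  rw [one_sub_div hx.ne', div_mul_div_comm, div_le_div_iff₀ (by positivity) (by positivity)]
  nlinarith

variable {l a j k : ℕ}

lemma mul_defect_le (hl : 0 < l) :
    (l * defect l k : ℝ) ≤ l / (l - k) - 4 * k ^ 2 / l * (1 - 1 / l) := by
  have hlR : (0 : ℝ) < l := mod_cast hl
  have := mul_le_mul_of_nonneg_left (four_div_mul_one_sub_le hlR) (sq_nonneg (k : ℝ))
  rw [defect]
  push_cast
  calc (l * (1 / (l - k) - 16 * k ^ 2 / (2 * l + 1) ^ 2) : ℝ)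
      = l / (l - k) - k ^ 2 * (16 * l / (2 * l + 1) ^ 2) := by ring
    _ ≤ l / (l - k) - k ^ 2 * (4 / l * (1 - 1 / l)) := by gcongr
    _ = _ := by ring

lemma decay_exponent_le {x b y : ℝ} (hb : 11 ≤ b) (hbx : 4 * b ^ 2 ≤ x) (hy₀ : 0 ≤ y)
    (hy₁ : y ≤ 1) : 4 * (b + 1) * (b + 1 + 2 * (b * y)) / (x - 2 * (b * y + b) - 3) ≤
      4 * b ^ 2 / x * ((576 + 1056 * y) / (459 - 22 * y)) := by
  rw [div_mul_div_comm]
  have hden : x * (459 - 22 * y) ≤ 484 * (x - 2 * (b * y + b) - 3) := by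
    nlinarith [mul_nonneg hy₀ (sub_nonneg.2 hbx), mul_nonneg hy₀ (sub_nonneg.2 hb)]
  have hnum : 484 * (4 * (b + 1) * (b + 1 + 2 * (b * y))) ≤ 4 * b ^ 2 * (576 + 1056 * y) := by
    nlinarith [mul_nonneg hy₀ (sub_nonneg.2 hb)]
  calc 4 * (b + 1) * (b + 1 + 2 * (b * y)) / (x - 2 * (b * y + b) - 3)
      = 484 * (4 * (b + 1) * (b + 1 + 2 * (b * y))) / (484 * (x - 2 * (b * y + b) - 3)) :=
        (mul_div_mul_left _ _ (by norm_num)).symm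
    _ ≤ _ := by
        refine div_le_div₀ (by positivity) hnum ?_ hden
        nlinarith

lemma mul_defect_add_exponent_le (ha : 11 ≤ a) (hal : 4 * a ^ 2 ≤ l) (hja : j ≤ a) :
    48 / 25 * (l * defect l j) + 4 * ((a + 1) * (a + 1 + 2 * j)) / (l - 2 * (j + a) - 3 : ℝ) ≤
      4 := by
  have haR : (11 : ℝ) ≤ a := mod_cast ha
  have halR : 4 * (a : ℝ) ^ 2 ≤ l := mod_cast hal
  have hjaR : (j : ℝ) ≤ a := mod_cast hja
  have hl : (484 : ℝ) ≤ l := by nlinarith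
  obtain ⟨y, hy⟩ : ∃ y : ℝ, (j : ℝ) = a * y := ⟨j / a, (mul_div_cancel₀ _ (by positivity)).symm⟩
  have hy₀ : 0 ≤ y := nonneg_of_mul_nonneg_right (hy ▸ j.cast_nonneg) (by positivity)
  have hy₁ : y ≤ 1 := le_of_mul_le_mul_left (by linarith) (show (0 : ℝ) < a by positivity)
  set t : ℝ := 4 * a ^ 2 / l with ht
  have ht₁ : t ≤ 1 := (div_le_one (by positivity)).2 halR
  have hdefect : l * (defect l j : ℝ) ≤ 44 / 43 - t * y ^ 2 * (483 / 484) := by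
    have hfirst : (l / (l - j) : ℝ) ≤ 44 / 43 := by
      rw [div_le_div_iff₀ (by nlinarith) (by norm_num)]
      nlinarith
    have hlast : (483 / 484 : ℝ) ≤ 1 - 1 / l := by
      have : (1 / l : ℝ) ≤ 1 / 484 := by gcongr
      linarith
    calc (l * defect l j : ℝ) ≤ l / (l - j) - 4 * j ^ 2 / l * (1 - 1 / l) :=
          mul_defect_le (by nlinarith)
      _ ≤ 44 / 43 - 4 * j ^ 2 / l * (483 / 484) := by gcongr
      _ = 44 / 43 - t * y ^ 2 * (483 / 484) := by rw [hy, ht]; ring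
  have hexponent := decay_exponent_le haR halR hy₀ hy₁
  rw [← hy, ← ht, mul_assoc 4] at hexponent
  have hle : t * ((576 + 1056 * y) / (459 - 22 * y) - 48 / 25 * (483 / 484) * y ^ 2) ≤
      4 - 48 / 25 * (44 / 43) :=
    (mul_le_mul_of_nonneg_left (div_sub_sq_le hy₁) (by positivity)).trans
      (mul_le_of_le_one_left (by norm_num) ht₁)
  linarith

lemma binomWeight_le_exp_mul_add (ha : 11 ≤ a) (hal : 4 * a ^ 2 ≤ l) (hja : j ≤ a) :
    (binomWeight l j : ℝ) ≤ exp (4 * ((a + 1) * (a + 1 + 2 * j)) / (l - 2 * (j + a) - 3)) *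
      binomWeight l (j + (a + 1)) := by
  have hm : (0 : ℝ) < l - 2 * (j + a) - 3 := by
    rw [sub_sub, sub_pos]
    exact_mod_cast (show 2 * (j + a) + 3 < l by nlinarith)
  have hweight := binomWeight_le_exp_mul (l := l) (c := j + a) (by nlinarith) (by nlinarith) hm
    (by push_cast; rfl) (Nat.le_add_right j (a + 1)) (by lia)
  convert hweight using 4
  push_cast
  ring

lemma exp_three_lt : exp 3 < 20.1 :=
  calc exp 3 = exp 1 ^ 3 := by rw [← exp_nat_mul]; norm_num
    _ < 2.7182818286 ^ 3 := by
      gcongr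
      exact exp_one_lt_d9
    _ < 20.1 := by norm_num

lemma mul_defect_mul_binomWeight_le (ha : 11 ≤ a) (hal : 4 * a ^ 2 ≤ l) (hja : j ≤ a) :
    (l * defect l j * binomWeight l j : ℝ) ≤ 1047 / 100 * binomWeight l (j + (a + 1)) := by
  have hweight := binomWeight_le_exp_mul_add ha hal hja
  have hexponent := mul_defect_add_exponent_le ha hal hja
  set Θ : ℝ := 4 * ((a + 1) * (a + 1 + 2 * j)) / (l - 2 * (j + a) - 3)
  -- `x ≤ exp (x - 1)` absorbs the defect into the exponential; the slope `48 / 25` keeps the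
  -- resulting exponent at most `3`.
  have htangent : 48 / 25 * (l * defect l j) ≤ exp (48 / 25 * (l * defect l j) - 1) := by
    linarith [add_one_le_exp (48 / 25 * (l * defect l j) - 1 : ℝ)]
  calc (l * defect l j * binomWeight l j : ℝ)
      = 25 / 48 * (48 / 25 * (l * defect l j)) * binomWeight l j := by ring
    _ ≤ 25 / 48 * exp (48 / 25 * (l * defect l j) - 1) *
        (exp Θ * binomWeight l (j + (a + 1))) := by gcongr
    _ = 25 / 48 * exp (48 / 25 * (l * defect l j) - 1 + Θ) * binomWeight l (j + (a + 1)) := by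
        rw [exp_add]
        ring
    _ ≤ 25 / 48 * exp 3 * binomWeight l (j + (a + 1)) := by
        gcongr
        linarith
    _ ≤ 1047 / 100 * binomWeight l (j + (a + 1)) := by
        gcongr
        linarith [exp_three_lt]

lemma le_four_mul_sq_div_sub {x n y : ℝ} (hn : 12 ≤ n) (hnx : 121 / 36 * n ^ 2 ≤ x)
    (hxn : x ≤ 4 * n ^ 2) (hy₀ : 0 ≤ y) (hy₁ : y ≤ 1) :
    (1 + y) ^ 2 * (1 - 36 / 121 * n⁻¹ ^ 2) - (1 + 36 / 115 * (1 + y) * n⁻¹) ≤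
      4 * (n * (1 + y)) ^ 2 / x * (1 - 1 / x) - x / (x - n * (1 + y)) := by
  have hx : 0 < x := by nlinarith
  have hgap : 115 / 36 * n ^ 2 ≤ x - n * (1 + y) := by nlinarith
  have hgap₀ : 0 < x - n * (1 + y) := by nlinarith
  have hsq : (1 + y) ^ 2 ≤ 4 * (n * (1 + y)) ^ 2 / x := by
    rw [le_div_iff₀ hx]
    nlinarith [sq_nonneg (1 + y)]
  have hinv : 1 / x ≤ 36 / 121 * n⁻¹ ^ 2 := by
    rw [div_le_iff₀ hx]
    field_simp
    linarith
  have hinv_le : 36 / 121 * n⁻¹ ^ 2 ≤ 1 := by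
    field_simp
    nlinarith
  have hlast : x / (x - n * (1 + y)) ≤ 1 + 36 / 115 * (1 + y) * n⁻¹ := by
    rw [div_le_iff₀ hgap₀]
    have : n * (1 + y) ≤ 36 / 115 * (1 + y) * n⁻¹ * (x - n * (1 + y)) :=
      calc n * (1 + y) = 36 / 115 * (1 + y) * n⁻¹ * (115 / 36 * n ^ 2) := by
            field_simp
        _ ≤ _ := by gcongr
    linarith
  have := mul_le_mul hsq (sub_le_sub_left hinv 1) (sub_nonneg.2 hinv_le) (by positivity)
  linarith

lemma sq_mul_lt_sq_mul_sub {x n y : ℝ} (hn : 12 ≤ n) (hnx : 121 / 36 * n ^ 2 ≤ x)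
    (hxn : x ≤ 4 * n ^ 2) (hny : 1 ≤ n * y) (hy₁ : y ≤ 1) :
    1047 / 100 * (n * y) ^ 2 * (x + n * (1 + y)) < (n * (1 + y)) ^ 2 * (x + n * y) *
      (4 * (n * (1 + y)) ^ 2 / x * (1 - 1 / x) - x / (x - n * (1 + y))) := by
  have hn₀ : 0 < n := by linarith
  have hεy : n⁻¹ ≤ y := (inv_le_iff_one_le_mul₀' hn₀).2 hny
  have hy₀ : 0 < y := (inv_pos.2 hn₀).trans_le hεy
  have hx₀ : 0 < x := by nlinarith
  have hε : n⁻¹ ≤ 1 / 12 := by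
    rw [one_div]
    gcongr
  have hgain := le_four_mul_sq_div_sub hn hnx hxn hy₀.le hy₁
  have hpoly := sq_mul_lt_of_le_one_twelfth (inv_pos.2 hn₀) hε hεy hy₁
  have hfactor : (1 - 36 / 121 * n⁻¹) * (x + n * (1 + y)) ≤ x + n * y := by
    have hn_le : n ≤ 36 / 121 * n⁻¹ * x :=
      calc n = 36 / 121 * n⁻¹ * (121 / 36 * n ^ 2) := by field_simp
        _ ≤ _ := by gcongr
    have hpos : 0 ≤ n⁻¹ * (n * (1 + y)) := by positivity
    linarith
  set G := (1 + y) ^ 2 * (1 - 36 / 121 * n⁻¹ ^ 2) - (1 + 36 / 115 * (1 + y) * n⁻¹)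
  have hG : 0 < G := by
    refine pos_of_mul_pos_right ((by positivity : (0 : ℝ) ≤ 1047 / 100 * y ^ 2).trans_lt hpoly) ?_
    exact mul_nonneg (sq_nonneg _) (by linarith)
  calc 1047 / 100 * (n * y) ^ 2 * (x + n * (1 + y))
      = 1047 / 100 * y ^ 2 * (n ^ 2 * (x + n * (1 + y))) := by ring
    _ < (1 + y) ^ 2 * (1 - 36 / 121 * n⁻¹) * G * (n ^ 2 * (x + n * (1 + y))) := by gcongr
    _ = (n * (1 + y)) ^ 2 * ((1 - 36 / 121 * n⁻¹) * (x + n * (1 + y))) * G := by ring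
    _ ≤ _ := by gcongr

lemma sq_mul_lt_sq_mul_neg_defect (ha : 11 ≤ a) (hal : 4 * a ^ 2 ≤ l)
    (hla : l < 4 * (a + 1) ^ 2) (hj : 1 ≤ j) (hja : j ≤ a) :
    1047 / 100 * j ^ 2 * (l + (j + (a + 1) : ℕ)) <
      (j + (a + 1) : ℕ) ^ 2 * (l + j) * -(l * defect l (j + (a + 1)) : ℝ) := by
  have haR : (11 : ℝ) ≤ a := mod_cast ha
  have halR : 4 * (a : ℝ) ^ 2 ≤ l := mod_cast hal
  have hlaR : (l : ℝ) ≤ 4 * (a + 1) ^ 2 := mod_cast hla.le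
  have hjR : (1 : ℝ) ≤ j := mod_cast hj
  have hjaR : (j : ℝ) ≤ a := mod_cast hja
  have hdefect := mul_defect_le (l := l) (k := j + (a + 1)) (by nlinarith)
  push_cast at hdefect ⊢
  set n : ℝ := a + 1
  have hn₀ : 0 < n := by positivity
  obtain ⟨y, hy⟩ : ∃ y : ℝ, (j : ℝ) = n * y := ⟨j / n, (mul_div_cancel₀ _ hn₀.ne').symm⟩
  have hy₁ : y ≤ 1 := le_of_mul_le_mul_left (by linarith) hn₀
  rw [hy] at hjR hdefect ⊢
  rw [show n * y + n = n * (1 + y) by ring] at hdefect ⊢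
  refine (sq_mul_lt_sq_mul_sub (by linarith) (by nlinarith) hlaR hjR hy₁).trans_le ?_
  gcongr
  linarith

lemma dFn_mul_cFn_add_pos_of_eleven_le (ha : 11 ≤ a) (hal : 4 * a ^ 2 ≤ l)
    (hla : l < 4 * (a + 1) ^ 2) (hj : 1 ≤ j) (hja : j ≤ a) (h : 3 * (j + (a + 1)) ≤ l) :
    0 < dFn l (j + (a + 1)) * cFn l (j + (a + 1)) + dFn l j * cFn l j := by
  have hlow : (l * defect l j * binomWeight l j : ℚ) ≤
      1047 / 100 * binomWeight l (j + (a + 1)) := by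
    rw [← Rat.cast_le (K := ℝ)]
    push_cast
    exact mul_defect_mul_binomWeight_le ha hal hja
  have hhigh : 1047 / 100 * j ^ 2 * (l + (j + (a + 1) : ℕ)) <
      (j + (a + 1) : ℕ) ^ 2 * (l + j) * -(l * defect l (j + (a + 1))) := by
    have := sq_mul_lt_sq_mul_neg_defect ha hal hla hj hja
    rw [← Rat.cast_lt (K := ℝ)]
    push_cast at this ⊢
    exact this
  have hw : (0 : ℚ) < binomWeight l (j + (a + 1)) := mod_cast binomWeight_pos h
  have hl : (0 : ℚ) < l := mod_cast (show 0 < l by lia)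
  have hpj := neg_defect_mul_binomWeight_le_dFn_mul_cFn (l := l) hj (by lia)
  have hpb := neg_defect_mul_binomWeight_le_dFn_mul_cFn (by lia) h
  generalize j + (a + 1) = b at *
  have hpair : (j ^ 2 / (2 * (l + j)) * (defect l j * binomWeight l j) : ℚ) <
      -(b ^ 2 / (2 * (l + b)) * (defect l b * binomWeight l b)) :=
    calc (j ^ 2 / (2 * (l + j)) * (defect l j * binomWeight l j) : ℚ)
        = j ^ 2 / (2 * l * (l + j)) * (l * defect l j * binomWeight l j) := by field_simp
      _ ≤ j ^ 2 / (2 * l * (l + j)) * (1047 / 100 * binomWeight l b) := by gcongr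
      _ = binomWeight l b / (2 * l * (l + j) * (l + b)) * (1047 / 100 * j ^ 2 * (l + b)) := by
          field_simp
      _ < binomWeight l b / (2 * l * (l + j) * (l + b)) *
          (b ^ 2 * (l + j) * -(l * defect l b)) := by gcongr
      _ = -(b ^ 2 / (2 * (l + b)) * (defect l b * binomWeight l b)) := by field_simp
  linarith

end Tail

lemma dFn_mul_cFn_add_pos {l a j : ℕ} (hl : 9 ≤ l) (hal : 4 * a ^ 2 ≤ l)
    (hla : l < 4 * (a + 1) ^ 2) (hj : 1 ≤ j) (hja : j ≤ a) (h : 3 * (j + (a + 1)) ≤ l) :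
    0 < dFn l (j + (a + 1)) * cFn l (j + (a + 1)) + dFn l j * cFn l j := by
  obtain ha | ha := lt_or_ge a 11
  · exact dFn_mul_cFn_add_pos_of_lt_eleven ha hl hal hla hj hja h
  · exact dFn_mul_cFn_add_pos_of_eleven_le ha hal hla hj hja h

lemma sum_cFn_pos {l : ℕ} (hl : 3 ≤ l) : 0 < ∑ i ∈ Finset.Icc 1 (l / 3), cFn l i := by
  refine Finset.sum_pos (fun i hi ↦ ?_) (Finset.nonempty_Icc.2 (by lia))
  rw [Finset.mem_Icc] at hi
  exact cFn_pos hi.1 (by lia)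

lemma four_mul_floor_sqrt_div_two_sq_le (l : ℕ) : 4 * ⌊√l / 2⌋₊ ^ 2 ≤ l := by
  have hfloor : (⌊√l / 2⌋₊ : ℝ) ≤ √l / 2 := Nat.floor_le (by positivity)
  have hsq : (4 * ⌊√l / 2⌋₊ ^ 2 : ℝ) ≤ l := by
    calc (4 * ⌊√l / 2⌋₊ ^ 2 : ℝ) ≤ 4 * (√l / 2) ^ 2 := by gcongr
      _ = l := by
        rw [div_pow, Real.sq_sqrt l.cast_nonneg]
        ring
  exact_mod_cast hsq

lemma lt_four_mul_floor_sqrt_div_two_add_one_sq (l : ℕ) : l < 4 * (⌊√l / 2⌋₊ + 1) ^ 2 := by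
  have hfloor : √l / 2 < ⌊√l / 2⌋₊ + 1 := Nat.lt_floor_add_one _
  have hsq : (l : ℝ) < 4 * (⌊√l / 2⌋₊ + 1) ^ 2 := by
    calc (l : ℝ) = 4 * (√l / 2) ^ 2 := by
          rw [div_pow, Real.sq_sqrt l.cast_nonneg]
          ring
      _ < 4 * (⌊√l / 2⌋₊ + 1) ^ 2 := by gcongr
  exact_mod_cast hsq

/-- For every integer `l ≥ 9`, with `a_l = ⌊√l/2⌋`, the pairwise inequalities
`d_l(a_l+1+j) · Q_l(a_l+1+j) > −d_l(j) · Q_l(j)` hold for every `1 ≤ j ≤ a_l`. -/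
theorem stmt15 (l : ℕ) (hl : 9 ≤ l) (j : ℕ) (hj1 : 1 ≤ j)
    (hj2 : j ≤ ⌊Real.sqrt l / 2⌋₊) :
    -(dFn l j * qFn l j)
      < dFn l (⌊Real.sqrt l / 2⌋₊ + 1 + j) * qFn l (⌊Real.sqrt l / 2⌋₊ + 1 + j) := by
  have hal := four_mul_floor_sqrt_div_two_sq_le l
  have hla := lt_four_mul_floor_sqrt_div_two_add_one_sq l
  generalize ⌊√l / 2⌋₊ = a at *
  have htau : 3 * (j + (a + 1)) ≤ l := by
    obtain rfl | ha : a = 1 ∨ 2 ≤ a := by lia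
    · lia
    · nlinarith
  have hpair := dFn_mul_cFn_add_pos hl hal hla hj1 hj2 htau
  rw [add_comm (a + 1) j, neg_lt_iff_pos_add, qFn, qFn, mul_div_assoc', mul_div_assoc', ← add_div]
  exact div_pos hpair (sum_cFn_pos (by lia))
end
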